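/- Let α ∈ (0,1), p > 1 real, c > 0, and let φ be an even, nontrivial steady solution with speed c (for either nonlinearity, case abs or case sgn) that is monotonically increasing on (−π, 0), satisfies n′(φ(x)) ≤ c for every x ∈ ℝ, and attains its maximum φ(0) = μ = (c/p)^(1/(p−1)). Then: (i) φ is strictly increasing on (−π, 0); (ii) φ is globally α-Hölder continuous, i.e. there is C > 0 such that |φ(x) − φ(y)| ≤ C·|x − y|^α for all x, y ∈ ℝ; (iii) φ is exactly α-Hölder continuous at 0: there exist δ, c₁, c₂ > 0 such that c₁·|x|^α ≤ μ − φ(x) ≤ c₂·|x|^α for every x with |x| ≤ δ. -/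

import Mathlib

open Real MeasureTheory Set Filter Topology

/-- The periodic convolution kernel `K_α`: equal to the explicit integral
representation for `x ∉ 2πℤ` and to `0` on `2πℤ`. -/
noncomputable def Kker (α x : ℝ) : ℝ :=
  letI : Decidable (∃ k : ℤ, x = 2 * π * k) := Classical.propDecidable _
  if ∃ k : ℤ, x = 2 * π * k then 0
  else (1 / (π * Real.Gamma α)) *
    ∫ t in Set.Ioi (0:ℝ),
      t ^ (α - 1) * (Real.exp t * Real.cos x - 1) /
        (1 - 2 * Real.exp t * Real.cos x + Real.exp (2 * t))

/-- A steady travelling-wave solution of speed `c` with nonlinearity `n`: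
a continuous, `2π`-periodic, zero-mean function `φ` satisfying the steady
convolution equation. -/
def IsSteadySolution (α c : ℝ) (n φ : ℝ → ℝ) : Prop :=
  Continuous φ ∧ Function.Periodic φ (2 * π) ∧
  (∫ y in (-π)..π, φ y) = 0 ∧
  ∀ x : ℝ, (∫ y in (-π)..π, Kker α (x - y) * φ y) =
    c * φ x - n (φ x) + (1 / (2 * π)) * ∫ y in (-π)..π, n (φ y)

/-- Case abs nonlinearity `n(x) = |x|^p`. -/
noncomputable def nAbs (p x : ℝ) : ℝ := |x| ^ p
/-- Case sgn nonlinearity `n(x) = x·|x|^(p-1)`. -/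
noncomputable def nSgn (p x : ℝ) : ℝ := x * |x| ^ (p - 1)
/-- Derivative of the case abs nonlinearity, `n′(x) = p·x·|x|^(p-2)`. -/
noncomputable def nAbs' (p x : ℝ) : ℝ := p * x * |x| ^ (p - 2)
/-- Derivative of the case sgn nonlinearity, `n′(x) = p·|x|^(p-1)`. -/
noncomputable def nSgn' (p x : ℝ) : ℝ := p * |x| ^ (p - 1)

/-!
Write the equation as `K * φ = G ∘ φ + const` with `G s = c s - n s`. Folding the convolution
about a midpoint `m` gives
`(K * φ)(m - h) - (K * φ)(m + h) = ∫₀^π (K (h - z) - K (h + z)) (φ (m - z) - φ (m + z)) dz`,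
whose integrand is a product of nonnegative factors because `K` and `φ` are even and decreasing on
`(0, π)`. If `φ (m - h) = φ (m + h)` the left side vanishes, so `φ` is symmetric about `m`; being
even it then has a smaller period and is constant. This proves strict monotonicity.

The critical height `μ` satisfies `G' μ = 0`, so `G s - G t` is comparable to `(s - t) (μ - t)` for
`t ≤ s ≤ μ`. On the other side, the singularity `K x ≈ |x| ^ (α - 1)` makes the folded integral over
the points `2 h`, `4 h` at least `h ^ α (φ (2 h) - φ (4 h))`; cancelling the common factor leaves
`μ - φ (4 h) ≳ h ^ α`. Conversely, `φ 0 - φ z ≤ A z ^ α` on `[b, π]` forces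
`(K * φ) a - (K * φ) b ≲ A b ^ α (b - a) ^ α`. At a maximum point `b` of `(φ 0 - φ z) / z ^ α` with
`a = 0` this bounds `A` itself, and for general `a < b`, together with the lower bound at the crest,
it gives `φ a - φ b ≲ (b - a) ^ α`.

For `n s = s |s| ^ (p - 1)` the function `G` is odd and has a second critical height `-μ`; there
`x ↦ -φ (π - x)` solves the same equation and exchanges crest and trough.
-/

/-! ### Periodic functions and their integrals -/

lemma eq_of_cos_eq {f : ℝ → ℝ} (hper : Function.Periodic f (2 * π)) (heven : Function.Even f)
    {x y : ℝ} (h : cos x = cos y) : f x = f y := by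
  obtain ⟨k, hk | hk⟩ := Real.cos_eq_cos_iff.mp h
  · rw [hk, show 2 * (k : ℝ) * π + x = x + k * (2 * π) by ring, hper.int_mul k x]
  · rw [hk, show 2 * (k : ℝ) * π - x = -x + k * (2 * π) by ring, hper.int_mul k, heven]

lemma le_of_cos_le {f : ℝ → ℝ} (hper : Function.Periodic f (2 * π)) (heven : Function.Even f)
    (hanti : AntitoneOn f (Icc 0 π)) {x y : ℝ} (h : cos x ≤ cos y) : f x ≤ f y := by
  have key (z : ℝ) : f z = f (arccos (cos z)) :=
    eq_of_cos_eq hper heven (Real.cos_arccos (Real.neg_one_le_cos z) (Real.cos_le_one z)).symm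
  rw [key x, key y]
  exact hanti ⟨Real.arccos_nonneg _, Real.arccos_le_pi _⟩
    ⟨Real.arccos_nonneg _, Real.arccos_le_pi _⟩ (Real.antitone_arccos h)

lemma integral_comp_add_left_eq_of_periodic {f : ℝ → ℝ} (hf : Function.Periodic f (2 * π))
    (m : ℝ) : ∫ z in -π..π, f (m + z) = ∫ z in -π..π, f z := by
  have h := hf.intervalIntegral_add_eq (m + -π) (-π)
  rw [show m + -π + 2 * π = m + π by ring, show -π + 2 * π = π by ring] at h
  rw [intervalIntegral.integral_comp_add_left, h]

lemma integral_symm_eq_integral_add_comp_neg {f : ℝ → ℝ} {a : ℝ}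
    (hf : ∀ r s, IntervalIntegrable f volume r s) :
    ∫ z in -a..a, f z = ∫ z in (0 : ℝ)..a, (f z + f (-z)) := by
  have hneg : IntervalIntegrable (fun z ↦ f (-z)) volume 0 a := by
    simpa using (hf 0 (-a)).comp_sub_left 0
  rw [intervalIntegral.integral_add (hf 0 a) hneg, intervalIntegral.integral_comp_neg,
    neg_zero, add_comm, intervalIntegral.integral_add_adjacent_intervals (hf _ _) (hf _ _)]

/-! ### Weighted integrals -/

lemma integral_rpow_mul_max_rpow_neg {α k x : ℝ} (hα : 0 < α) (hk : α < k) (hx : 0 < x) :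
    IntegrableOn (fun t ↦ t ^ (α - 1) * (max t x) ^ (-k)) (Ioi 0) ∧
      ∫ t in Ioi (0 : ℝ), t ^ (α - 1) * (max t x) ^ (-k) =
        (1 / α + 1 / (k - α)) * x ^ (α - k) := by
  have hnear : EqOn (fun t ↦ t ^ (α - 1) * (max t x) ^ (-k)) (fun t ↦ t ^ (α - 1) * x ^ (-k))
      (Ioc 0 x) := fun t ht ↦ by
    simp only [max_eq_right ht.2]
  have hfar : EqOn (fun t ↦ t ^ (α - 1) * (max t x) ^ (-k)) (fun t ↦ t ^ (α - 1 - k))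
      (Ioi x) := fun t (ht : x < t) ↦ by
    simp only [max_eq_left ht.le, ← Real.rpow_add (hx.trans ht), ← sub_eq_add_neg]
  have hint_near : IntegrableOn (fun t ↦ t ^ (α - 1) * (max t x) ^ (-k)) (Ioc 0 x) := by
    rw [integrableOn_congr_fun hnear measurableSet_Ioc,
      ← intervalIntegrable_iff_integrableOn_Ioc_of_le hx.le]
    exact (intervalIntegral.intervalIntegrable_rpow' (by linarith)).mul_const _
  have hint_far : IntegrableOn (fun t ↦ t ^ (α - 1) * (max t x) ^ (-k)) (Ioi x) := by
    rw [integrableOn_congr_fun hfar measurableSet_Ioi]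
    exact integrableOn_Ioi_rpow_of_lt (by linarith) hx
  rw [← Ioc_union_Ioi_eq_Ioi hx.le]
  refine ⟨hint_near.union hint_far, ?_⟩
  rw [setIntegral_union Ioc_disjoint_Ioi_same measurableSet_Ioi hint_near hint_far,
    setIntegral_congr_fun measurableSet_Ioc hnear, setIntegral_congr_fun measurableSet_Ioi hfar,
    integral_mul_const, ← intervalIntegral.integral_of_le hx.le,
    integral_rpow (Or.inl (by linarith)), integral_Ioi_rpow_of_lt (by linarith) hx,
    sub_add_cancel, Real.zero_rpow hα.ne', sub_zero, show α - 1 - k + 1 = α - k by ring,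
    sub_eq_add_neg α k, Real.rpow_add hx]
  have hkα : k - α ≠ 0 := by linarith
  have hαk : α + -k ≠ 0 := by linarith
  field_simp
  ring

lemma integrableOn_rpow_mul_and_abs_integral_le {α k C x : ℝ} (hα : 0 < α) (hk : α < k)
    (hx : 0 < x) {g : ℝ → ℝ} (hg : ContinuousOn g (Ioi 0))
    (hbound : ∀ t > 0, |g t| ≤ C * (max t x) ^ (-k)) :
    IntegrableOn (fun t ↦ t ^ (α - 1) * g t) (Ioi 0) ∧
      |∫ t in Ioi (0 : ℝ), t ^ (α - 1) * g t| ≤ C * (1 / α + 1 / (k - α)) * x ^ (α - k) := by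
  obtain ⟨hint, hval⟩ := integral_rpow_mul_max_rpow_neg hα hk hx
  have hle : ∀ᵐ t ∂volume.restrict (Ioi (0 : ℝ)),
      ‖t ^ (α - 1) * g t‖ ≤ C * (t ^ (α - 1) * (max t x) ^ (-k)) := by
    refine (ae_restrict_iff' measurableSet_Ioi).mpr (ae_of_all _ fun t ht ↦ ?_)
    have hpow : 0 ≤ t ^ (α - 1) := Real.rpow_nonneg (le_of_lt ht) _
    rw [norm_mul, Real.norm_of_nonneg hpow, Real.norm_eq_abs, mul_left_comm]
    exact mul_le_mul_of_nonneg_left (hbound t ht) hpow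
  have hmeas : AEStronglyMeasurable (fun t ↦ t ^ (α - 1) * g t) (volume.restrict (Ioi 0)) :=
    ((continuousOn_id.rpow_const fun t ht ↦ Or.inl (ne_of_gt ht)).mul hg).aestronglyMeasurable
      measurableSet_Ioi
  refine ⟨(hint.const_mul C).mono' hmeas hle, ?_⟩
  calc |∫ t in Ioi (0 : ℝ), t ^ (α - 1) * g t|
      ≤ ∫ t in Ioi (0 : ℝ), C * (t ^ (α - 1) * (max t x) ^ (-k)) :=
        norm_integral_le_of_norm_le (hint.const_mul C) hle
    _ = C * (1 / α + 1 / (k - α)) * x ^ (α - k) := by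
        rw [integral_const_mul, hval, mul_assoc]

/-! ### The centred Poisson kernel -/

lemma sq_div_le_one_sub_cos {x : ℝ} (h0 : 0 ≤ x) (h1 : x ≤ 3 * π / 2) :
    x ^ 2 / 25 ≤ 1 - cos x := by
  rcases le_total x π with hx | hx
  · have hcos := Real.cos_le_one_sub_mul_cos_sq (abs_le.mpr ⟨by linarith, hx⟩)
    have hpi : (1 : ℝ) / 25 ≤ 2 / π ^ 2 := by
      rw [div_le_div_iff₀ (by norm_num) (by positivity)]
      nlinarith [Real.pi_pos, Real.pi_lt_d2]
    nlinarith [sq_nonneg x]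
  · have hcos : cos x ≤ 0 :=
      Real.cos_nonpos_of_pi_div_two_le_of_le (by linarith [Real.pi_pos]) (by linarith)
    nlinarith [Real.pi_pos, Real.pi_lt_d2]

lemma cos_lt_one_of_pos_of_le {x : ℝ} (h0 : 0 < x) (h1 : x ≤ 3 * π / 2) : cos x < 1 := by
  have hsq : 0 < x ^ 2 := by positivity
  linarith [sq_div_le_one_sub_cos h0.le h1]

lemma sq_div_le_cosh_sub_one {t : ℝ} (ht : 0 ≤ t) : t ^ 2 / 4 ≤ cosh t - 1 := by
  rw [Real.cosh_eq]
  linarith [Real.quadratic_le_exp_of_nonneg ht, Real.add_one_le_exp (-t)]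

lemma cube_div_le_cosh_sub_one {t : ℝ} (ht : 0 ≤ t) : t ^ 3 / 12 ≤ cosh t - 1 := by
  have hexp := Real.sum_le_exp_of_nonneg ht 4
  norm_num [Finset.sum_range_succ, Nat.factorial] at hexp
  rw [Real.cosh_eq]
  nlinarith [Real.add_one_le_exp (-t)]

lemma cosh_le_one_add_sq {t : ℝ} (ht : |t| ≤ 2) : cosh t ≤ 1 + 4 * t ^ 2 := by
  set u := t ^ 2 / 2 with hu
  have hu2 : u ≤ 1 + 1 := by nlinarith [sq_le_sq' (abs_le.mp ht).1 (abs_le.mp ht).2]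
  have hexp_le : exp u ≤ 8 := by
    refine (Real.exp_le_exp.mpr hu2).trans ?_
    rw [Real.exp_add]
    nlinarith [Real.exp_one_lt_d9, Real.exp_pos 1]
  have hinv : exp (-u) * exp u = 1 := by rw [← Real.exp_add, neg_add_cancel, Real.exp_zero]
  have htangent : exp u ≤ 1 + u * exp u := by
    nlinarith [Real.add_one_le_exp (-u), Real.exp_pos u]
  calc cosh t ≤ exp u := Real.cosh_le_exp_half_sq t
    _ ≤ 1 + u * 8 := htangent.trans (by gcongr)
    _ = 1 + 4 * t ^ 2 := by rw [hu]; ring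

lemma cosh_sub_cos_pos {t : ℝ} (ht : 0 < t) (x : ℝ) : 0 < cosh t - cos x := by
  linarith [Real.one_lt_cosh.mpr ht.ne', Real.cos_le_one x]

lemma max_sq_div_le_cosh_sub_cos {t x : ℝ} (ht : 0 < t) (h0 : 0 < x) (h1 : x ≤ 3 * π / 2) :
    max t x ^ 2 / 25 ≤ cosh t - cos x := by
  have hcos := sq_div_le_one_sub_cos h0.le h1
  rcases max_choice t x with hm | hm <;> rw [hm]
  · linarith [sq_div_le_cosh_sub_one ht.le, Real.cos_le_one x, sq_nonneg t]
  · linarith [Real.one_le_cosh t]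

lemma max_cube_div_le_cosh_sub_cos {t x : ℝ} (ht : 0 < t) (h0 : 0 < x) (h1 : x ≤ 3 * π / 2) :
    max t x ^ 3 / 125 ≤ cosh t - cos x := by
  rcases max_choice t x with hm | hm <;> rw [hm]
  · have hcube : 0 < t ^ 3 := by positivity
    linarith [cube_div_le_cosh_sub_one ht.le, Real.cos_le_one x]
  · have hx : x ≤ 5 := by linarith [Real.pi_lt_d2]
    nlinarith [sq_div_le_one_sub_cos h0.le h1, Real.one_le_cosh t, sq_nonneg x]

/-- With `r = exp (-t)`, this is `(P_r(x) - 1) / 2` for the Poisson kernel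
`P_r(x) = (1 - r²) / (1 - 2 r cos x + r²)` of the unit disc; the kernel `K_α` is its Mellin
transform in `t`. -/
noncomputable def centeredPoisson (t x : ℝ) : ℝ := sinh t / (2 * (cosh t - cos x)) - 1 / 2

lemma centeredPoisson_eq_div {t : ℝ} (ht : 0 < t) (x : ℝ) :
    centeredPoisson t x = (cos x - exp (-t)) / (2 * (cosh t - cos x)) := by
  have hD := (cosh_sub_cos_pos ht x).ne'
  rw [centeredPoisson, ← Real.cosh_sub_sinh]
  field_simp
  ring

lemma centeredPoisson_eq_exp_div {t : ℝ} (ht : 0 < t) (x : ℝ) :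
    centeredPoisson t x = (exp t * cos x - 1) / (1 - 2 * exp t * cos x + exp (2 * t)) := by
  have hinv : exp t * exp (-t) = 1 := by rw [← Real.exp_add, add_neg_cancel, Real.exp_zero]
  have hdouble : exp (2 * t) = exp t * exp t := by rw [two_mul, Real.exp_add]
  have hnum : exp t * cos x - 1 = exp t * (cos x - exp (-t)) := by linear_combination hinv
  have hden : 1 - 2 * exp t * cos x + exp (2 * t) = exp t * (2 * (cosh t - cos x)) := by
    rw [Real.cosh_eq, hdouble]
    linear_combination -hinv
  rw [centeredPoisson_eq_div ht, hnum, hden, mul_div_mul_left _ _ (Real.exp_pos t).ne']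

lemma abs_centeredPoisson_le {t x : ℝ} (ht : 0 < t) (h0 : 0 < x) (h1 : x ≤ 3 * π / 2) :
    |centeredPoisson t x| ≤ 15 / max t x := by
  have hD := cosh_sub_cos_pos ht x
  have hsq := max_sq_div_le_cosh_sub_cos ht h0 h1
  have hm : 0 < max t x := lt_max_of_lt_left ht
  have hexp : exp (-t) < 1 := Real.exp_lt_one_iff.mpr (by linarith)
  have hnum_two : |cos x - exp (-t)| ≤ 2 := by
    rw [abs_le]
    constructor <;> linarith [Real.neg_one_le_cos x, Real.cos_le_one x, Real.exp_pos (-t)]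
  have hnum : |cos x - exp (-t)| ≤ cosh t - cos x + max t x := by
    rw [abs_le]
    constructor <;> linarith [Real.add_one_le_exp (-t), Real.cos_le_one x, Real.one_le_cosh t,
      le_max_left t x]
  rw [centeredPoisson_eq_div ht, abs_div, abs_of_pos (mul_pos two_pos hD),
    div_le_div_iff₀ (by linarith) hm]
  rcases le_total (max t x) 5 with h5 | h5
  · nlinarith
  · nlinarith

lemma centeredPoisson_sub {t : ℝ} (ht : 0 < t) (x y : ℝ) :
    centeredPoisson t x - centeredPoisson t y =
      sinh t * (cos x - cos y) / (2 * (cosh t - cos x) * (cosh t - cos y)) := by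
  have hx := (cosh_sub_cos_pos ht x).ne'
  have hy := (cosh_sub_cos_pos ht y).ne'
  unfold centeredPoisson
  field_simp
  ring

lemma centeredPoisson_lt {t : ℝ} (ht : 0 < t) {x y : ℝ} (h : cos x < cos y) :
    centeredPoisson t x < centeredPoisson t y := by
  have hx := cosh_sub_cos_pos ht x
  have hy := cosh_sub_cos_pos ht y
  rw [← sub_pos, centeredPoisson_sub ht]
  positivity

lemma continuousOn_centeredPoisson (x : ℝ) :
    ContinuousOn (fun t ↦ centeredPoisson t x) (Ioi 0) := by
  refine (Real.continuous_sinh.continuousOn.div ?_ fun t ht ↦ ?_).sub continuousOn_const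
  · exact (continuous_const.mul (Real.continuous_cosh.sub continuous_const)).continuousOn
  · exact (mul_pos two_pos (cosh_sub_cos_pos ht x)).ne'

lemma hasDerivAt_centeredPoisson {t : ℝ} (ht : 0 < t) (x : ℝ) :
    HasDerivAt (centeredPoisson t) (-(sinh t * sin x) / (2 * (cosh t - cos x) ^ 2)) x := by
  have hD := cosh_sub_cos_pos ht x
  have hden := ((Real.hasDerivAt_cos x).const_sub (cosh t)).const_mul 2
  refine (((hasDerivAt_const x (sinh t)).div hden (by positivity)).sub_const (1 / 2)).congr_deriv ?_
  field_simp
  ring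

lemma hasDerivAt_deriv_centeredPoisson {t : ℝ} (ht : 0 < t) (x : ℝ) :
    HasDerivAt (fun x ↦ -(sinh t * sin x) / (2 * (cosh t - cos x) ^ 2))
      (sinh t / (2 * (cosh t - cos x) ^ 2) *
        (-cos x + 2 * sin x ^ 2 / (cosh t - cos x))) x := by
  have hD := cosh_sub_cos_pos ht x
  have hnum := ((Real.hasDerivAt_sin x).const_mul (sinh t)).neg
  have hden := (((Real.hasDerivAt_cos x).const_sub (cosh t)).pow 2).const_mul 2
  refine (hnum.div hden (mul_pos two_pos (pow_pos hD 2)).ne').congr_deriv ?_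
  simp only [Pi.neg_apply, Pi.pow_apply]
  field_simp
  ring

lemma max_cube_mul_sinh_le {t x : ℝ} (ht : 0 < t) (h0 : 0 < x) (h1 : x ≤ 3 * π / 2) :
    max t x ^ 3 * sinh t ≤ 220 * (cosh t - cos x) ^ 2 := by
  set D := cosh t - cos x
  set m := max t x
  have hD : 0 < D := cosh_sub_cos_pos ht x
  have hsinh : sinh t ^ 2 ≤ D ^ 2 + 2 * D := by
    nlinarith [Real.cosh_sq t, Real.cos_le_one x, Real.neg_one_le_cos x, Real.one_le_cosh t]
  have hsixth : (m ^ 3) ^ 2 ≤ (125 * D) ^ 2 := by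
    have hcube : m ^ 3 / 125 ≤ D := max_cube_div_le_cosh_sub_cos ht h0 h1
    exact pow_le_pow_left₀ (by positivity) (by linarith) 2
  have hsixth' : (m ^ 2) ^ 3 ≤ (25 * D) ^ 3 := by
    have hsq : m ^ 2 / 25 ≤ D := max_sq_div_le_cosh_sub_cos ht h0 h1
    exact pow_le_pow_left₀ (by positivity) (by linarith) 3
  refine le_of_sq_le_sq ?_ (by positivity)
  calc (m ^ 3 * sinh t) ^ 2 = (m ^ 3) ^ 2 * sinh t ^ 2 := mul_pow ..
    _ ≤ (m ^ 3) ^ 2 * (D ^ 2 + 2 * D) := by gcongr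
    _ = (m ^ 3) ^ 2 * D ^ 2 + 2 * D * (m ^ 2) ^ 3 := by ring
    _ ≤ (125 * D) ^ 2 * D ^ 2 + 2 * D * (25 * D) ^ 3 := by gcongr
    _ ≤ (220 * D ^ 2) ^ 2 := by nlinarith [sq_nonneg (D ^ 2)]

lemma abs_deriv_deriv_centeredPoisson_le {t x : ℝ} (ht : 0 < t) (h0 : 0 < x)
    (h1 : x ≤ 3 * π / 2) :
    |sinh t / (2 * (cosh t - cos x) ^ 2) * (-cos x + 2 * sin x ^ 2 / (cosh t - cos x))|
      ≤ 550 / max t x ^ 3 := by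
  have hD := cosh_sub_cos_pos ht x
  have hsin : 2 * sin x ^ 2 / (cosh t - cos x) ≤ 4 := by
    rw [div_le_iff₀ hD]
    nlinarith [Real.sin_sq_add_cos_sq x, Real.cos_le_one x, Real.one_le_cosh t]
  have hsin0 : 0 ≤ 2 * sin x ^ 2 / (cosh t - cos x) := by positivity
  have htrig : |-cos x + 2 * sin x ^ 2 / (cosh t - cos x)| ≤ 5 := by
    rw [abs_le]
    constructor <;> linarith [Real.cos_le_one x, Real.neg_one_le_cos x]
  have hfactor : sinh t / (2 * (cosh t - cos x) ^ 2) ≤ 110 / max t x ^ 3 := by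
    rw [div_le_div_iff₀ (by positivity) (by positivity)]
    linarith [max_cube_mul_sinh_le ht h0 h1]
  rw [abs_mul, abs_of_pos (by positivity)]
  calc sinh t / (2 * (cosh t - cos x) ^ 2) * |-cos x + 2 * sin x ^ 2 / (cosh t - cos x)|
      ≤ 110 / max t x ^ 3 * 5 := by gcongr
    _ = 550 / max t x ^ 3 := by ring

lemma abs_symm_sum_sub_symm_sum_le {f f' f'' : ℝ → ℝ} {y a b M : ℝ} (ha : 0 ≤ a) (hab : a ≤ b)
    (hf : ∀ x, HasDerivAt f (f' x) x) (hf' : ∀ x, HasDerivAt f' (f'' x) x)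
    (hM : ∀ x ∈ Icc (y - b) (y + b), |f'' x| ≤ M) :
    |(f (y + b) + f (y - b)) - (f (y + a) + f (y - a))| ≤ 2 * M * ((b - a) * b) := by
  have hM0 : 0 ≤ M := (abs_nonneg _).trans (hM y ⟨by linarith, by linarith⟩)
  have hderiv (x : ℝ) :
      HasDerivAt (fun x ↦ f (y + x) + f (y - x)) (f' (y + x) - f' (y - x)) x :=
    (((hf _).comp_const_add y x).add ((hf _).comp_const_sub y x)).congr_deriv (by ring)
  have hbound : ∀ x ∈ Icc a b, ‖f' (y + x) - f' (y - x)‖ ≤ 2 * M * b := fun x hx ↦ by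
    have hmvt := (convex_Icc (y - b) (y + b)).norm_image_sub_le_of_norm_hasDerivWithin_le
      (fun z _ ↦ (hf' z).hasDerivWithinAt) hM
      (x := y - x) (y := y + x) ⟨by linarith [hx.2], by linarith [hx.1]⟩
      ⟨by linarith [hx.1, hx.2], by linarith [hx.2]⟩
    have hwidth : ‖y + x - (y - x)‖ = 2 * x := by
      rw [show y + x - (y - x) = 2 * x by ring, Real.norm_of_nonneg (by linarith [hx.1])]
    rw [hwidth] at hmvt
    nlinarith [hx.2]
  have hmvt := (convex_Icc a b).norm_image_sub_le_of_norm_hasDerivWithin_le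
    (fun x _ ↦ (hderiv x).hasDerivWithinAt) hbound (left_mem_Icc.mpr hab) (right_mem_Icc.mpr hab)
  rw [Real.norm_eq_abs, Real.norm_of_nonneg (sub_nonneg.mpr hab)] at hmvt
  exact hmvt.trans_eq (by ring)

lemma abs_centeredPoisson_second_difference_le {t a b y : ℝ} (ht : 0 < t) (ha : 0 ≤ a)
    (hab : a ≤ b) (hb : 2 * b ≤ y) (hy0 : 0 < y) (hy : y ≤ π) :
    |(centeredPoisson t (y + b) + centeredPoisson t (y - b)) -
      (centeredPoisson t (y + a) + centeredPoisson t (y - a))|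
      ≤ 8800 * ((b - a) * b) / max t y ^ 3 := by
  have hmax : 0 < max t y := lt_max_of_lt_left ht
  refine (abs_symm_sum_sub_symm_sum_le (M := 4400 / max t y ^ 3) ha hab
    (hasDerivAt_centeredPoisson ht) (hasDerivAt_deriv_centeredPoisson ht) fun x hx ↦ ?_).trans_eq
    (by ring)
  refine (abs_deriv_deriv_centeredPoisson_le ht (by linarith [hx.1]) (by linarith [hx.2])).trans ?_
  have hmax_le : max t y ≤ 2 * max t x :=
    max_le (by linarith [le_max_left t x]) (by linarith [le_max_right t x, hx.1])
  rw [div_le_div_iff₀ (by positivity) (by positivity)]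
  nlinarith [pow_le_pow_left₀ hmax.le hmax_le 3]

lemma le_centeredPoisson_sub_two_mul {t s : ℝ} (hs : 0 < s) (hs1 : s ≤ 1) (hst : s ≤ t)
    (hts : t ≤ 2 * s) :
    1 / (16200 * s) ≤ centeredPoisson t s - centeredPoisson t (2 * s) := by
  have ht : 0 < t := hs.trans_le hst
  have hDs := cosh_sub_cos_pos ht s
  have hDs' := cosh_sub_cos_pos ht (2 * s)
  have hcosh : cosh t ≤ 1 + 16 * s ^ 2 := by
    have hle := cosh_le_one_add_sq (t := t) (abs_le.mpr ⟨by linarith, by linarith⟩)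
    nlinarith
  have hupper : cosh t - cos s ≤ 18 * s ^ 2 := by
    nlinarith [Real.one_sub_sq_div_two_le_cos (x := s)]
  have hupper' : cosh t - cos (2 * s) ≤ 18 * s ^ 2 := by
    nlinarith [Real.one_sub_sq_div_two_le_cos (x := 2 * s)]
  have hcos : s ^ 2 / 25 ≤ cos s - cos (2 * s) := by
    have hcos_nonneg : 0 ≤ cos s := Real.cos_nonneg_of_neg_pi_div_two_le_of_le
      (by linarith [Real.pi_gt_three]) (by linarith [Real.pi_gt_three])
    rw [Real.cos_two_mul]
    nlinarith [Real.cos_le_one s, sq_div_le_one_sub_cos hs.le (by linarith [Real.pi_gt_three])]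
  have hsinh : s ≤ sinh t := hst.trans (Real.self_le_sinh_iff.mpr ht.le)
  rw [centeredPoisson_sub ht]
  calc 1 / (16200 * s) = s * (s ^ 2 / 25) / (2 * (18 * s ^ 2) * (18 * s ^ 2)) := by
        field_simp
        norm_num
    _ ≤ sinh t * (cos s - cos (2 * s)) / (2 * (cosh t - cos s) * (cosh t - cos (2 * s))) := by
        gcongr
        exact mul_nonneg (hs.le.trans hsinh) (le_trans (by positivity) hcos)

/-! ### Periodic kernels with an integrable power singularity -/

/-- An even `2π`-periodic kernel `K`, strictly decreasing on `(0, π]`, which behaves like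
`|x| ^ (α - 1)` near `0`: from above to second order, and from below through its dyadic
differences. These are the only properties of `K_α` that the regularity theory uses. -/
structure SingularKernel (K : ℝ → ℝ) (α : ℝ) : Prop where
  exponent_pos : 0 < α
  exponent_lt_one : α < 1
  periodic : Function.Periodic K (2 * π)
  even : Function.Even K
  strictAntiOn : StrictAntiOn K (Ioc 0 π)
  power_bound : ∃ C > 0, ∀ x ∈ Ioc 0 π, |K x| ≤ C * x ^ (α - 1)
  second_difference : ∃ C > 0, ∀ a b y, 0 ≤ a → a ≤ b → 2 * b ≤ y → 0 < y → y ≤ π →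
    |(K (y + b) + K (y - b)) - (K (y + a) + K (y - a))| ≤ C * ((b - a) * b) * y ^ (α - 3)
  dyadic_difference : ∃ C > 0, ∀ s ∈ Ioc 0 1, C * s ^ (α - 1) ≤ K s - K (2 * s)

section Kker

variable {α x y : ℝ}

lemma exists_int_eq_two_pi_mul_iff : (∃ k : ℤ, x = 2 * π * k) ↔ cos x = 1 := by
  rw [Real.cos_eq_one_iff]
  exact exists_congr fun k ↦ by rw [eq_comm, mul_comm]

lemma Kker_eq_zero (hx : cos x = 1) : Kker α x = 0 :=
  if_pos (exists_int_eq_two_pi_mul_iff.mpr hx)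

lemma Kker_eq_integral (hx : cos x < 1) :
    Kker α x = 1 / (π * Real.Gamma α) *
      ∫ t in Ioi (0 : ℝ), t ^ (α - 1) * centeredPoisson t x := by
  unfold Kker
  rw [if_neg fun h ↦ hx.ne (exists_int_eq_two_pi_mul_iff.mp h)]
  congr 1
  refine setIntegral_congr_fun measurableSet_Ioi fun t ht ↦ ?_
  rw [mul_div_assoc, centeredPoisson_eq_exp_div ht]

lemma Kker_eq_of_cos_eq (h : cos x = cos y) : Kker α x = Kker α y := by
  rcases (Real.cos_le_one x).lt_or_eq with hx | hx
  · rw [Kker_eq_integral hx, Kker_eq_integral (h ▸ hx)]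
    simp only [centeredPoisson, h]
  · rw [Kker_eq_zero hx, Kker_eq_zero (h ▸ hx)]

lemma mellin_centeredPoisson (hα₀ : 0 < α) (hα₁ : α < 1) (hx₀ : 0 < x) (hx₁ : x ≤ 3 * π / 2) :
    IntegrableOn (fun t ↦ t ^ (α - 1) * centeredPoisson t x) (Ioi 0) ∧
      |∫ t in Ioi (0 : ℝ), t ^ (α - 1) * centeredPoisson t x| ≤
        15 * (1 / α + 1 / (1 - α)) * x ^ (α - 1) := by
  refine integrableOn_rpow_mul_and_abs_integral_le hα₀ hα₁ hx₀ (continuousOn_centeredPoisson x)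
    fun t ht ↦ ?_
  rw [Real.rpow_neg_one, ← div_eq_mul_inv]
  exact abs_centeredPoisson_le ht hx₀ hx₁

lemma exists_abs_Kker_le (hα₀ : 0 < α) (hα₁ : α < 1) :
    ∃ C > 0, ∀ x ∈ Ioc 0 π, |Kker α x| ≤ C * x ^ (α - 1) := by
  have hκ : 0 < 1 / (π * Real.Gamma α) := by positivity
  refine ⟨1 / (π * Real.Gamma α) * (15 * (1 / α + 1 / (1 - α))), by positivity, fun x hx ↦ ?_⟩
  have hx' : x ≤ 3 * π / 2 := by linarith [hx.2, Real.pi_pos]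
  rw [Kker_eq_integral (cos_lt_one_of_pos_of_le hx.1 hx'), abs_mul, abs_of_pos hκ, mul_assoc]
  gcongr
  exact (mellin_centeredPoisson hα₀ hα₁ hx.1 hx').2

lemma strictAntiOn_Kker (hα₀ : 0 < α) (hα₁ : α < 1) : StrictAntiOn (Kker α) (Ioc 0 π) := by
  intro x hx y hy hxy
  have hx' : x ≤ 3 * π / 2 := by linarith [hx.2, Real.pi_pos]
  have hy' : y ≤ 3 * π / 2 := by linarith [hy.2, Real.pi_pos]
  have hcos : cos y < cos x := Real.cos_lt_cos_of_nonneg_of_le_pi hx.1.le hy.2 hxy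
  have hintx := (mellin_centeredPoisson hα₀ hα₁ hx.1 hx').1
  have hinty := (mellin_centeredPoisson hα₀ hα₁ hy.1 hy').1
  have hlt : ∀ t ∈ Ioi (0 : ℝ),
      0 < t ^ (α - 1) * centeredPoisson t x - t ^ (α - 1) * centeredPoisson t y := fun t ht ↦
    sub_pos.mpr (mul_lt_mul_of_pos_left (centeredPoisson_lt ht hcos) (Real.rpow_pos_of_pos ht _))
  rw [Kker_eq_integral (cos_lt_one_of_pos_of_le hx.1 hx'),
    Kker_eq_integral (cos_lt_one_of_pos_of_le hy.1 hy')]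
  refine mul_lt_mul_of_pos_left ?_ (by positivity : 0 < 1 / (π * Real.Gamma α))
  rw [← sub_pos, ← integral_sub hintx hinty, setIntegral_pos_iff_support_of_nonneg_ae
    ((ae_restrict_iff' measurableSet_Ioi).mpr (ae_of_all _ fun t ht ↦ (hlt t ht).le))
    (hintx.sub hinty)]
  exact (show 0 < volume (Ioi (0 : ℝ)) by simp).trans_le
    (measure_mono fun t ht ↦ ⟨(hlt t ht).ne', ht⟩)

lemma exists_Kker_second_difference_le (hα₀ : 0 < α) (hα₁ : α < 1) :
    ∃ C > 0, ∀ a b y, 0 ≤ a → a ≤ b → 2 * b ≤ y → 0 < y → y ≤ π →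
      |(Kker α (y + b) + Kker α (y - b)) - (Kker α (y + a) + Kker α (y - a))|
        ≤ C * ((b - a) * b) * y ^ (α - 3) := by
  have hκ : 0 < 1 / (π * Real.Gamma α) := by positivity
  have hsub : 0 < 3 - α := by linarith
  refine ⟨1 / (π * Real.Gamma α) * (8800 * (1 / α + 1 / (3 - α))), by positivity,
    fun a b y ha hab hb hy hyπ ↦ ?_⟩
  have hmellin (x : ℝ) (hx₀ : 0 < x) (hx₁ : x ≤ 3 * π / 2) : cos x < 1 ∧
      IntegrableOn (fun t ↦ t ^ (α - 1) * centeredPoisson t x) (Ioi 0) :=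
    ⟨cos_lt_one_of_pos_of_le hx₀ hx₁, (mellin_centeredPoisson hα₀ hα₁ hx₀ hx₁).1⟩
  obtain ⟨hcos₁, hint₁⟩ := hmellin (y + b) (by linarith) (by linarith)
  obtain ⟨hcos₂, hint₂⟩ := hmellin (y - b) (by linarith) (by linarith)
  obtain ⟨hcos₃, hint₃⟩ := hmellin (y + a) (by linarith) (by linarith)
  obtain ⟨hcos₄, hint₄⟩ := hmellin (y - a) (by linarith) (by linarith)
  have hweighted := (integrableOn_rpow_mul_and_abs_integral_le (k := 3)
    (C := 8800 * ((b - a) * b)) hα₀ (by linarith) hy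
    (((continuousOn_centeredPoisson (y + b)).add (continuousOn_centeredPoisson (y - b))).sub
      ((continuousOn_centeredPoisson (y + a)).add (continuousOn_centeredPoisson (y - a))))
    fun t ht ↦ by
      have hcast : max t y ^ (-3 : ℝ) = (max t y ^ 3)⁻¹ := by
        rw [Real.rpow_neg (hy.le.trans (le_max_right t y))]
        norm_cast
      rw [hcast, ← div_eq_mul_inv]
      exact abs_centeredPoisson_second_difference_le ht ha hab hb hy hyπ).2
  simp only [Pi.add_apply, Pi.sub_apply, mul_sub (_ ^ (α - 1)), mul_add (_ ^ (α - 1))]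
    at hweighted
  rw [integral_sub, integral_add hint₁ hint₂, integral_add hint₃ hint₄] at hweighted
  · rw [Kker_eq_integral hcos₁, Kker_eq_integral hcos₂, Kker_eq_integral hcos₃,
      Kker_eq_integral hcos₄, ← mul_add, ← mul_add, ← mul_sub, abs_mul, abs_of_pos hκ]
    exact (mul_le_mul_of_nonneg_left hweighted hκ.le).trans_eq (by ring)
  · exact hint₁.add hint₂
  · exact hint₃.add hint₄

lemma exists_le_Kker_sub_Kker_two_mul (hα₀ : 0 < α) (hα₁ : α < 1) :
    ∃ C > 0, ∀ s ∈ Ioc 0 1, C * s ^ (α - 1) ≤ Kker α s - Kker α (2 * s) := by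
  have hκ : 0 < 1 / (π * Real.Gamma α) := by positivity
  refine ⟨1 / (π * Real.Gamma α) * (2 ^ (α - 1) / 16200), by positivity, fun s ⟨hs, hs1⟩ ↦ ?_⟩
  have hs₁ : s ≤ 3 * π / 2 := by linarith [Real.pi_gt_three]
  have hs₂ : 2 * s ≤ 3 * π / 2 := by linarith [Real.pi_gt_three]
  have hcos : cos (2 * s) < cos s :=
    Real.cos_lt_cos_of_nonneg_of_le_pi hs.le (by linarith [Real.pi_gt_three]) (by linarith)
  have hint := (mellin_centeredPoisson hα₀ hα₁ hs hs₁).1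
  have hint' := (mellin_centeredPoisson hα₀ hα₁ (by linarith) hs₂).1
  set g : ℝ → ℝ := fun t ↦
    t ^ (α - 1) * centeredPoisson t s - t ^ (α - 1) * centeredPoisson t (2 * s)
  have hsubset : Ioc s (2 * s) ⊆ Ioi 0 := fun t ht ↦ hs.trans ht.1
  have hnonneg : ∀ t ∈ Ioi (0 : ℝ), 0 ≤ g t := fun t ht ↦ sub_nonneg.mpr
    (mul_le_mul_of_nonneg_left (centeredPoisson_lt ht hcos).le (Real.rpow_nonneg (le_of_lt ht) _))
  have hlower : ∀ t ∈ Ioc s (2 * s), (2 * s) ^ (α - 1) * (1 / (16200 * s)) ≤ g t := by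
    intro t ht
    have hrpow : (2 * s) ^ (α - 1) ≤ t ^ (α - 1) :=
      Real.rpow_le_rpow_of_nonpos (hsubset ht) ht.2 (by linarith)
    calc (2 * s) ^ (α - 1) * (1 / (16200 * s))
        ≤ t ^ (α - 1) * (centeredPoisson t s - centeredPoisson t (2 * s)) := by
          gcongr
          · exact (Real.rpow_pos_of_pos (hsubset ht) _).le
          · exact le_centeredPoisson_sub_two_mul hs hs1 ht.1.le ht.2
      _ = g t := mul_sub ..
  have hmono : (2 * s) ^ (α - 1) * (1 / (16200 * s)) * s ≤ ∫ t in Ioi (0 : ℝ), g t := by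
    have hvol : volume.real (Ioc s (2 * s)) = s := by
      rw [Real.volume_real_Ioc_of_le (by linarith)]
      ring
    refine (hvol ▸ setIntegral_ge_of_const_le_real measurableSet_Ioc measure_Ioc_lt_top.ne hlower
      ((hint.sub hint').mono_set hsubset)).trans ?_
    exact setIntegral_mono_set (hint.sub hint')
      ((ae_restrict_iff' measurableSet_Ioi).mpr (ae_of_all _ hnonneg)) hsubset.eventuallyLE
  rw [Kker_eq_integral (cos_lt_one_of_pos_of_le hs hs₁),
    Kker_eq_integral (cos_lt_one_of_pos_of_le (by linarith) hs₂), ← mul_sub,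
    ← integral_sub hint hint', mul_assoc]
  refine mul_le_mul_of_nonneg_left (le_of_eq_of_le ?_ hmono) hκ.le
  rw [Real.mul_rpow zero_le_two hs.le]
  field_simp

theorem singularKernel_Kker (hα₀ : 0 < α) (hα₁ : α < 1) : SingularKernel (Kker α) α where
  exponent_pos := hα₀
  exponent_lt_one := hα₁
  periodic x := Kker_eq_of_cos_eq (Real.cos_periodic x)
  even x := Kker_eq_of_cos_eq (Real.cos_neg x)
  strictAntiOn := strictAntiOn_Kker hα₀ hα₁
  power_bound := exists_abs_Kker_le hα₀ hα₁
  second_difference := exists_Kker_second_difference_le hα₀ hα₁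
  dyadic_difference := exists_le_Kker_sub_Kker_two_mul hα₀ hα₁

end Kker

/-- The difference of the even parts of `y ↦ 2 K (b - y)` and `y ↦ 2 K (a - y)`, against which an
even function is integrated over half a period to compare its convolutions with `K` at `a` and
`b`. -/
def symmDiffKernel (K : ℝ → ℝ) (a b y : ℝ) : ℝ :=
  (K (b - y) + K (b + y)) - (K (a - y) + K (a + y))

namespace SingularKernel

variable {K : ℝ → ℝ} {α : ℝ}

lemma lt_of_cos_lt (hK : SingularKernel K α) {x y : ℝ} (hxy : cos x < cos y) (hy : cos y < 1) :
    K x < K y := by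
  have harccos (z : ℝ) : K z = K (arccos (cos z)) := eq_of_cos_eq hK.periodic hK.even
    (Real.cos_arccos (Real.neg_one_le_cos z) (Real.cos_le_one z)).symm
  have hlt := Real.arccos_lt_arccos (Real.neg_one_le_cos x) hxy (Real.cos_le_one y)
  have hpos : 0 < arccos (cos y) := Real.arccos_pos.mpr hy
  rw [harccos x, harccos y]
  exact hK.strictAntiOn ⟨hpos, Real.arccos_le_pi _⟩ ⟨hpos.trans hlt, Real.arccos_le_pi _⟩ hlt

lemma add_lt_sub (hK : SingularKernel K α) {h z : ℝ} (hh : h ∈ Ioo 0 π) (hz : z ∈ Ioo 0 π)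
    (hne : z ≠ h) : K (h + z) < K (h - z) := by
  apply hK.lt_of_cos_lt
  · rw [Real.cos_add, Real.cos_sub]
    linarith [mul_pos (Real.sin_pos_of_mem_Ioo hh) (Real.sin_pos_of_mem_Ioo hz)]
  · rw [← Real.cos_abs]
    refine cos_lt_one_of_pos_of_le (abs_pos.mpr (sub_ne_zero.mpr hne.symm)) ?_
    exact abs_sub_le_iff.mpr
      ⟨by linarith [hh.2, hz.1, Real.pi_pos], by linarith [hh.1, hz.2, Real.pi_pos]⟩

lemma intervalIntegrable (hK : SingularKernel K α) (a b : ℝ) :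
    IntervalIntegrable K volume a b := by
  obtain ⟨C, -, hC⟩ := hK.power_bound
  have hright : IntervalIntegrable K volume 0 π := by
    have hpow := (intervalIntegral.intervalIntegrable_rpow' (a := 0) (b := π) (r := α - 1)
      (by linarith [hK.exponent_pos])).const_mul C
    refine hpow.mono_fun' ?_ ?_ <;> rw [uIoc_of_le Real.pi_pos.le]
    · exact (aemeasurable_restrict_of_antitoneOn measurableSet_Ioc
        hK.strictAntiOn.antitoneOn).aestronglyMeasurable
    · exact (ae_restrict_iff' measurableSet_Ioc).mpr (ae_of_all _ hC)
  have hleft : IntervalIntegrable K volume (-π) 0 := by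
    simpa [hK.even _] using (hright.comp_sub_left 0).symm
  refine hK.periodic.intervalIntegrable Real.two_pi_pos.ne' (t := -π) ?_ a b
  rw [show -π + 2 * π = π by ring]
  exact hleft.trans hright

lemma intervalIntegrable_comp_sub (hK : SingularKernel K α) (x a b : ℝ) :
    IntervalIntegrable (fun y ↦ K (x - y)) volume a b := by
  simpa using (hK.intervalIntegrable (x - a) (x - b)).comp_sub_left x

lemma intervalIntegrable_comp_add (hK : SingularKernel K α) (x a b : ℝ) :
    IntervalIntegrable (fun y ↦ K (x + y)) volume a b := by
  simpa using (hK.intervalIntegrable (x + a) (x + b)).comp_add_left x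

lemma intervalIntegrable_symmDiffKernel (hK : SingularKernel K α) (a b r s : ℝ) :
    IntervalIntegrable (symmDiffKernel K a b) volume r s :=
  ((hK.intervalIntegrable_comp_sub b r s).add (hK.intervalIntegrable_comp_add b r s)).sub
    ((hK.intervalIntegrable_comp_sub a r s).add (hK.intervalIntegrable_comp_add a r s))

lemma exists_abs_le_rpow (hK : SingularKernel K α) :
    ∃ C > 0, ∀ h x, 0 < h → h ≤ x → x ≤ 2 * π - h → |K x| ≤ C * h ^ (α - 1) := by
  obtain ⟨C, hC, hbound⟩ := hK.power_bound
  have hfold (h x : ℝ) (hh : 0 < h) (hhx : h ≤ x) (hx : x ≤ π) : |K x| ≤ C * h ^ (α - 1) :=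
    (hbound x ⟨hh.trans_le hhx, hx⟩).trans <| mul_le_mul_of_nonneg_left
      (Real.rpow_le_rpow_of_nonpos hh hhx (by linarith [hK.exponent_lt_one])) hC.le
  refine ⟨C, hC, fun h x hh hhx hx ↦ ?_⟩
  rcases le_total x π with hxπ | hxπ
  · exact hfold h x hh hhx hxπ
  · rw [eq_of_cos_eq hK.periodic hK.even (Real.cos_two_pi_sub x).symm]
    exact hfold h _ hh (by linarith) (by linarith)

lemma integral_sub_sub_add_eq (hK : SingularKernel K α) (h : ℝ) :
    ∫ z in (0 : ℝ)..π, (K (h - z) - K (h + z)) =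
      2 * (∫ x in (0 : ℝ)..h, K x) - ∫ x in (π - h)..(π + h), K x := by
  have hint := hK.intervalIntegrable
  have hsymm : ∫ x in -h..h, K x = 2 * ∫ x in (0 : ℝ)..h, K x := by
    rw [integral_symm_eq_integral_add_comp_neg hint, ← intervalIntegral.integral_const_mul]
    simp only [hK.even _, two_mul]
  have hreflect : ∫ x in (h - π)..-h, K x = ∫ x in h..(π - h), K x := by
    rw [← neg_sub π h, ← intervalIntegral.integral_comp_neg]
    simp only [hK.even _]
  rw [intervalIntegral.integral_sub (hK.intervalIntegrable_comp_sub h 0 π)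
    (hK.intervalIntegrable_comp_add h 0 π), intervalIntegral.integral_comp_sub_left,
    intervalIntegral.integral_comp_add_left, sub_zero, add_zero, add_comm h π,
    ← intervalIntegral.integral_add_adjacent_intervals (hint (h - π) (-h)) (hint (-h) h),
    ← intervalIntegral.integral_add_adjacent_intervals (hint h (π - h)) (hint (π - h) (π + h)),
    hsymm, hreflect]
  ring

lemma exists_integral_sub_sub_add_le (hK : SingularKernel K α) :
    ∃ C > 0, ∀ h, 0 < h → h ≤ π / 2 →
      ∫ z in (0 : ℝ)..π, (K (h - z) - K (h + z)) ≤ C * h ^ α := by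
  obtain ⟨C, hC, hbound⟩ := hK.power_bound
  obtain ⟨C', hC', hbound'⟩ := hK.exists_abs_le_rpow
  have hα := hK.exponent_pos
  refine ⟨2 * (C / α) + 2 * C', by positivity, fun h hh hhπ ↦ ?_⟩
  have hsing : ∫ x in (0 : ℝ)..h, K x ≤ C / α * h ^ α := by
    calc ∫ x in (0 : ℝ)..h, K x ≤ ∫ x in (0 : ℝ)..h, C * x ^ (α - 1) := by
          refine intervalIntegral.integral_mono_on_of_le_Ioo hh.le (hK.intervalIntegrable _ _)
            ((intervalIntegral.intervalIntegrable_rpow' (by linarith)).const_mul C) fun x hx ↦ ?_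
          exact (le_abs_self _).trans (hbound x ⟨hx.1, by linarith [hx.2, Real.pi_pos]⟩)
      _ = C / α * h ^ α := by
          rw [intervalIntegral.integral_const_mul, integral_rpow (Or.inl (by linarith)),
            sub_add_cancel, Real.zero_rpow hα.ne', sub_zero, mul_div_assoc', div_mul_eq_mul_div]
  have hregular : ‖∫ x in (π - h)..(π + h), K x‖ ≤ 2 * C' * h ^ α := by
    refine (intervalIntegral.norm_integral_le_of_norm_le_const (C := C' * h ^ (α - 1))
      fun x hx ↦ ?_).trans_eq ?_
    · rw [uIoc_of_le (by linarith)] at hx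
      exact hbound' h x hh (by linarith [hx.1]) (by linarith [hx.2])
    · rw [show π + h - (π - h) = 2 * h by ring, abs_of_pos (by positivity),
        Real.rpow_sub_one hh.ne']
      field_simp
  rw [hK.integral_sub_sub_add_eq]
  linarith [neg_le_of_abs_le hregular]

lemma integral_abs_sub_eq (hK : SingularKernel K α) {h : ℝ} (hh : h ∈ Ioo 0 π) :
    ∫ z in -π..π, |K (h - z) - K (h + z)| = 2 * ∫ z in (0 : ℝ)..π, (K (h - z) - K (h + z)) := by
  rw [integral_symm_eq_integral_add_comp_neg fun r s ↦ ((hK.intervalIntegrable_comp_sub h r s).sub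
    (hK.intervalIntegrable_comp_add h r s)).abs, ← intervalIntegral.integral_const_mul]
  apply intervalIntegral.integral_congr_ae
  filter_upwards [Measure.ae_ne volume h, Measure.ae_ne volume π] with z hzh hzπ hz
  rw [uIoc_of_le Real.pi_pos.le] at hz
  have hlt := hK.add_lt_sub hh ⟨hz.1, lt_of_le_of_ne hz.2 hzπ⟩ hzh
  rw [sub_neg_eq_add, ← sub_eq_add_neg, abs_sub_comm (K (h + z)), abs_of_pos (sub_pos.mpr hlt),
    two_mul]

lemma integral_abs_comp_sub_sub_eq (hK : SingularKernel K α) {a b h : ℝ} (hh : b - a = 2 * h) :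
    ∫ y in -π..π, |K (b - y) - K (a - y)| = ∫ z in -π..π, |K (h - z) - K (h + z)| := by
  have hper : Function.Periodic (fun y ↦ |K (b - y) - K (a - y)|) (2 * π) := fun y ↦ by
    simp only [← sub_sub, hK.periodic.sub_eq]
  rw [← integral_comp_add_left_eq_of_periodic hper (a + h)]
  congr with z
  rw [show b - (a + h + z) = h - z by linarith, show a - (a + h + z) = -(h + z) by ring, hK.even]

lemma exists_integral_abs_symmDiffKernel_le (hK : SingularKernel K α) :
    ∃ C > 0, ∀ a b, 0 ≤ a → a < b → b ≤ π →
      ∫ y in (0 : ℝ)..π, |symmDiffKernel K a b y| ≤ C * (b - a) ^ α := by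
  obtain ⟨C, hC, hbound⟩ := hK.exists_integral_sub_sub_add_le
  refine ⟨2 * C, by positivity, fun a b ha hab hb ↦ ?_⟩
  have hint (r s : ℝ) : IntervalIntegrable (fun y ↦ |K (b - y) - K (a - y)|) volume r s :=
    ((hK.intervalIntegrable_comp_sub b r s).sub (hK.intervalIntegrable_comp_sub a r s)).abs
  have hint' : IntervalIntegrable (fun y ↦ |K (b + y) - K (a + y)|) volume 0 π :=
    ((hK.intervalIntegrable_comp_add b 0 π).sub (hK.intervalIntegrable_comp_add a 0 π)).abs
  have hpointwise (y : ℝ) :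
      |symmDiffKernel K a b y| ≤ |K (b - y) - K (a - y)| + |K (b + y) - K (a + y)| := by
    rw [symmDiffKernel, add_sub_add_comm]
    exact abs_add_le _ _
  set h := (b - a) / 2 with hh
  have hle : h ≤ b - a := by linarith
  calc ∫ y in (0 : ℝ)..π, |symmDiffKernel K a b y|
      ≤ ∫ y in (0 : ℝ)..π, (|K (b - y) - K (a - y)| + |K (b + y) - K (a + y)|) :=
        intervalIntegral.integral_mono_on Real.pi_pos.le
          (hK.intervalIntegrable_symmDiffKernel a b 0 π).abs ((hint 0 π).add hint')
          fun y _ ↦ hpointwise y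
    _ = ∫ y in -π..π, |K (b - y) - K (a - y)| := by
        rw [integral_symm_eq_integral_add_comp_neg hint]
        simp only [sub_neg_eq_add]
    _ = 2 * ∫ z in (0 : ℝ)..π, (K (h - z) - K (h + z)) := by
        rw [hK.integral_abs_comp_sub_sub_eq (h := h) (by linarith),
          hK.integral_abs_sub_eq ⟨by linarith, by linarith [Real.pi_pos]⟩]
    _ ≤ 2 * (C * h ^ α) := by
        gcongr
        exact hbound h (by linarith) (by linarith)
    _ ≤ 2 * C * (b - a) ^ α := by
        rw [← mul_assoc]
        have hα := hK.exponent_pos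
        gcongr

end SingularKernel

/-! ### Convolution of a singular kernel with a bell-shaped profile -/

/-- The convolution of `K` and `φ` over one period, as an operator acting on `φ`. -/
noncomputable def periodicConv (K φ : ℝ → ℝ) (x : ℝ) : ℝ :=
  ∫ y in -π..π, K (x - y) * φ y

/-- A continuous even `2π`-periodic profile which decreases, not necessarily strictly, from its
crest at `0` to its trough at `π`. -/
structure BellShaped (φ : ℝ → ℝ) : Prop where
  continuous : Continuous φ
  periodic : Function.Periodic φ (2 * π)
  even : Function.Even φ
  antitoneOn : AntitoneOn φ (Icc 0 π)

namespace BellShaped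

variable {φ : ℝ → ℝ}

lemma le_apply_zero (hφ : BellShaped φ) (x : ℝ) : φ x ≤ φ 0 :=
  le_of_cos_le hφ.periodic hφ.even hφ.antitoneOn (Real.cos_zero ▸ Real.cos_le_one x)

lemma apply_pi_le (hφ : BellShaped φ) (x : ℝ) : φ π ≤ φ x :=
  le_of_cos_le hφ.periodic hφ.even hφ.antitoneOn (Real.cos_pi ▸ Real.neg_one_le_cos x)

lemma add_le_sub (hφ : BellShaped φ) {m z : ℝ} (hm : m ∈ Icc 0 π) (hz : z ∈ Icc 0 π) :
    φ (m + z) ≤ φ (m - z) := by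
  apply le_of_cos_le hφ.periodic hφ.even hφ.antitoneOn
  rw [Real.cos_add, Real.cos_sub]
  linarith [mul_nonneg (Real.sin_nonneg_of_mem_Icc hm) (Real.sin_nonneg_of_mem_Icc hz)]

end BellShaped

lemma integral_rpow_le_of_lt_neg_one {a b s : ℝ} (ha : 0 < a) (hab : a ≤ b) (hs : s < -1) :
    ∫ x in a..b, x ^ s ≤ a ^ (s + 1) / (-(s + 1)) := by
  have hzero : (0 : ℝ) ∉ uIcc a b := by
    rw [uIcc_of_le hab]
    exact fun h ↦ h.1.not_gt ha
  have hpos : 0 < b ^ (s + 1) := Real.rpow_pos_of_pos (ha.trans_le hab) _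
  rw [integral_rpow (Or.inr ⟨hs.ne, hzero⟩), ← neg_div_neg_eq, neg_sub]
  exact div_le_div_of_nonneg_right (by linarith) (by linarith)

lemma mul_rpow_two_mul_sub_one_le {t b α : ℝ} (ht : 0 < t) (htb : t ≤ b) (hα : α ≤ 1) :
    t * b ^ (2 * α - 1) ≤ t ^ α * b ^ α := by
  have hb : 0 < b := ht.trans_le htb
  calc t * b ^ (2 * α - 1) = t ^ α * t ^ (1 - α) * b ^ (2 * α - 1) := by
        rw [← Real.rpow_add ht, add_sub_cancel, Real.rpow_one]
    _ ≤ t ^ α * b ^ (1 - α) * b ^ (2 * α - 1) := by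
        have := Real.rpow_le_rpow ht.le htb (sub_nonneg.mpr hα)
        gcongr
    _ = t ^ α * b ^ α := by
        rw [mul_assoc, ← Real.rpow_add hb]
        ring_nf

namespace SingularKernel

variable {K φ : ℝ → ℝ} {α : ℝ}

lemma intervalIntegrable_comp_sub_mul (hK : SingularKernel K α) (hφ : Continuous φ) (x a b : ℝ) :
    IntervalIntegrable (fun y ↦ K (x - y) * φ y) volume a b :=
  (hK.intervalIntegrable_comp_sub x a b).mul_continuousOn hφ.continuousOn

lemma periodicConv_eq_integral_comp_add (hK : SingularKernel K α)
    (hφ : Function.Periodic φ (2 * π)) (m x : ℝ) :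
    periodicConv K φ x = ∫ z in -π..π, K (x - m - z) * φ (m + z) := by
  have hper : Function.Periodic (fun y ↦ K (x - y) * φ y) (2 * π) := fun y ↦ by
    simp only [hφ y, ← sub_sub, hK.periodic.sub_eq]
  rw [periodicConv, ← integral_comp_add_left_eq_of_periodic hper m]
  simp only [sub_sub]

lemma periodicConv_sub_sub_add_eq_integral (hK : SingularKernel K α) (hφ : Continuous φ)
    (hper : Function.Periodic φ (2 * π)) (m h : ℝ) :
    periodicConv K φ (m - h) - periodicConv K φ (m + h) =
      ∫ z in (0 : ℝ)..π, (K (h - z) - K (h + z)) * (φ (m - z) - φ (m + z)) := by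
  have hint (x r s : ℝ) : IntervalIntegrable (fun z ↦ K (x - z) * φ (m + z)) volume r s :=
    hK.intervalIntegrable_comp_sub_mul (by fun_prop) x r s
  have hneg (z : ℝ) : K (-h - z) = K (h + z) := by rw [← hK.even (h + z), neg_add']
  rw [hK.periodicConv_eq_integral_comp_add hper m, hK.periodicConv_eq_integral_comp_add hper m,
    sub_sub_cancel_left, add_sub_cancel_left,
    ← intervalIntegral.integral_sub (hint _ _ _) (hint _ _ _),
    integral_symm_eq_integral_add_comp_neg fun r s ↦ (hint (-h) r s).sub (hint h r s)]
  congr with z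
  rw [hneg, hneg, sub_neg_eq_add, ← sub_eq_add_neg, ← sub_eq_add_neg]
  ring

lemma periodicConv_sub_eq_integral_symmDiffKernel (hK : SingularKernel K α) (hφ : Continuous φ)
    (heven : Function.Even φ) (q a b : ℝ) :
    periodicConv K φ a - periodicConv K φ b =
      ∫ y in (0 : ℝ)..π, symmDiffKernel K a b y * (q - φ y) := by
  have hint (x r s : ℝ) := hK.intervalIntegrable_comp_sub_mul (φ := fun y ↦ q - φ y)
    (by fun_prop) x r s
  have hconst (x : ℝ) :
      ∫ y in -π..π, K (x - y) * (q - φ y) = q * (∫ y in -π..π, K y) - periodicConv K φ x := by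
    have hmean : ∫ y in -π..π, K (x - y) = ∫ y in -π..π, K y := by
      rw [← integral_comp_add_left_eq_of_periodic hK.periodic (-x)]
      congr with y
      rw [← hK.even, neg_sub, sub_eq_neg_add]
    simp only [mul_sub]
    rw [intervalIntegral.integral_sub ((hK.intervalIntegrable_comp_sub x _ _).mul_const q)
      (hK.intervalIntegrable_comp_sub_mul hφ x _ _), intervalIntegral.integral_mul_const, hmean,
      mul_comm, periodicConv]
  calc periodicConv K φ a - periodicConv K φ b
      = ∫ y in -π..π, (K (b - y) * (q - φ y) - K (a - y) * (q - φ y)) := by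
        rw [intervalIntegral.integral_sub (hint b _ _) (hint a _ _), hconst, hconst]
        ring
    _ = ∫ y in (0 : ℝ)..π, symmDiffKernel K a b y * (q - φ y) := by
        rw [integral_symm_eq_integral_add_comp_neg fun r s ↦ (hint b r s).sub (hint a r s)]
        congr with y
        rw [heven, symmDiffKernel, sub_neg_eq_add, sub_neg_eq_add]
        ring

lemma intervalIntegrable_reflection (hK : SingularKernel K α) (hφ : Continuous φ)
    (m h a b : ℝ) :
    IntervalIntegrable (fun z ↦ (K (h - z) - K (h + z)) * (φ (m - z) - φ (m + z)))
      volume a b :=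
  ((hK.intervalIntegrable_comp_sub h a b).sub
    (hK.intervalIntegrable_comp_add h a b)).mul_continuousOn (by fun_prop)

lemma ae_nonneg_reflection (hK : SingularKernel K α) (hφ : BellShaped φ)
    {m h : ℝ} (hm : m ∈ Icc 0 π) (hh : h ∈ Ioo 0 π) :
    0 ≤ᵐ[volume.restrict (Ioc 0 π)]
      fun z ↦ (K (h - z) - K (h + z)) * (φ (m - z) - φ (m + z)) := by
  filter_upwards [ae_restrict_mem measurableSet_Ioc, Measure.ae_ne _ h, Measure.ae_ne _ π]
    with z hz hzh hzπ
  exact mul_nonneg (sub_nonneg.mpr (hK.add_lt_sub hh ⟨hz.1, hz.2.lt_of_ne hzπ⟩ hzh).le)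
    (sub_nonneg.mpr (hφ.add_le_sub hm (Ioc_subset_Icc_self hz)))

lemma symmDiffKernel_eq (hK : SingularKernel K α) (a b y : ℝ) :
    symmDiffKernel K a b y = (K (y + b) + K (y - b)) - (K (y + a) + K (y - a)) := by
  rw [symmDiffKernel, ← hK.even (b - y), ← hK.even (a - y), neg_sub, neg_sub, add_comm b,
    add_comm a, add_comm (K (y - b)), add_comm (K (y - a))]

lemma exists_integral_symmDiffKernel_mul_le_of_abs_le (hK : SingularKernel K α) :
    ∃ C > 0, ∀ u : ℝ → ℝ, Continuous u → ∀ a b r M, 0 ≤ a → a < b → b ≤ π → r ∈ Icc 0 π →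
      0 ≤ M → (∀ y ∈ Icc 0 r, |u y| ≤ M) →
      ∫ y in (0 : ℝ)..r, symmDiffKernel K a b y * u y ≤ C * M * (b - a) ^ α := by
  obtain ⟨C, hC, hL1⟩ := hK.exists_integral_abs_symmDiffKernel_le
  refine ⟨C, hC, fun u hu a b r M ha hab hb hr hM hbound ↦ ?_⟩
  have hint (s : ℝ) := hK.intervalIntegrable_symmDiffKernel a b 0 s
  calc ∫ y in (0 : ℝ)..r, symmDiffKernel K a b y * u y
      ≤ ∫ y in (0 : ℝ)..r, |symmDiffKernel K a b y| * M := by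
        refine intervalIntegral.integral_mono_on hr.1 ((hint r).mul_continuousOn hu.continuousOn)
          ((hint r).abs.mul_const M) fun y hy ↦ (le_abs_self _).trans ?_
        rw [abs_mul]
        exact mul_le_mul_of_nonneg_left (hbound y hy) (abs_nonneg _)
    _ = (∫ y in (0 : ℝ)..r, |symmDiffKernel K a b y|) * M :=
        intervalIntegral.integral_mul_const _ _
    _ ≤ (C * (b - a) ^ α) * M := by
        gcongr
        exact (intervalIntegral.integral_mono_interval le_rfl hr.1 hr.2
          (ae_of_all _ fun y ↦ abs_nonneg _) (hint π).abs).trans (hL1 a b ha hab hb)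
    _ = C * M * (b - a) ^ α := by ring

lemma exists_integral_symmDiffKernel_mul_le_of_abs_le_rpow (hK : SingularKernel K α) :
    ∃ C > 0, ∀ u : ℝ → ℝ, Continuous u → ∀ a b A, 0 ≤ a → a < b → 2 * b ≤ π → 0 ≤ A →
      (∀ y ∈ Icc (2 * b) π, |u y| ≤ A * y ^ α) →
      ∫ y in (2 * b)..π, symmDiffKernel K a b y * u y ≤ C * A * b ^ α * (b - a) ^ α := by
  obtain ⟨C, hC, hdiff⟩ := hK.second_difference
  have hα := hK.exponent_lt_one
  have hgap : 0 < 2 - 2 * α := by linarith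
  refine ⟨C / (2 - 2 * α), by positivity, fun u hu a b A ha hab hb hA hbound ↦ ?_⟩
  have hb₀ : 0 < b := ha.trans_lt hab
  have hba : 0 < b - a := sub_pos.mpr hab
  have hzero : (0 : ℝ) ∉ uIcc (2 * b) π := by
    rw [uIcc_of_le hb]
    exact fun h ↦ by linarith [h.1]
  have hpointwise (y : ℝ) (hy : y ∈ Icc (2 * b) π) :
      symmDiffKernel K a b y * u y ≤ C * ((b - a) * b) * A * y ^ (2 * α - 3) := by
    have hy₀ : 0 < y := by linarith [hy.1]
    have hker := hdiff a b y ha hab.le hy.1 hy₀ hy.2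
    rw [← hK.symmDiffKernel_eq] at hker
    calc symmDiffKernel K a b y * u y ≤ |symmDiffKernel K a b y| * |u y| := by
          rw [← abs_mul]
          exact le_abs_self _
      _ ≤ C * ((b - a) * b) * y ^ (α - 3) * (A * y ^ α) :=
          mul_le_mul hker (hbound y hy) (abs_nonneg _) (by positivity)
      _ = C * ((b - a) * b) * A * y ^ (2 * α - 3) := by
          rw [show 2 * α - 3 = (α - 3) + α by ring, Real.rpow_add hy₀]
          ring
  calc ∫ y in (2 * b)..π, symmDiffKernel K a b y * u y
      ≤ ∫ y in (2 * b)..π, C * ((b - a) * b) * A * y ^ (2 * α - 3) :=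
        intervalIntegral.integral_mono_on hb
          ((hK.intervalIntegrable_symmDiffKernel a b _ _).mul_continuousOn hu.continuousOn)
          ((intervalIntegral.intervalIntegrable_rpow (Or.inr hzero)).const_mul _) hpointwise
    _ ≤ C * ((b - a) * b) * A * ((2 * b) ^ (2 * α - 3 + 1) / (-(2 * α - 3 + 1))) := by
        rw [intervalIntegral.integral_const_mul]
        exact mul_le_mul_of_nonneg_left
          (integral_rpow_le_of_lt_neg_one (by positivity) hb (by linarith)) (by positivity)
    _ = C * ((b - a) * b) * A * ((2 * b) ^ (2 * α - 2) / (2 - 2 * α)) := by ring_nf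
    _ ≤ C * ((b - a) * b) * A * (b ^ (2 * α - 2) / (2 - 2 * α)) := by
        have := Real.rpow_le_rpow_of_nonpos hb₀ (by linarith : b ≤ 2 * b)
          (by linarith : 2 * α - 2 ≤ 0)
        gcongr
    _ = C / (2 - 2 * α) * A * ((b - a) * b ^ (2 * α - 1)) := by
        rw [show 2 * α - 1 = 2 * α - 2 + 1 by ring, Real.rpow_add_one hb₀.ne']
        ring
    _ ≤ C / (2 - 2 * α) * A * ((b - a) ^ α * b ^ α) :=
        mul_le_mul_of_nonneg_left
          (mul_rpow_two_mul_sub_one_le hba (by linarith) hα.le) (by positivity)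
    _ = C / (2 - 2 * α) * A * b ^ α * (b - a) ^ α := by ring

/-- The gain `b ^ α` over the usual Hölder estimate for a convolution is what later compensates
the degeneracy of the equation at the crest. -/
theorem exists_periodicConv_sub_le (hK : SingularKernel K α) :
    ∃ C > 0, ∀ φ, BellShaped φ → ∀ a b A, 0 ≤ a → a < b → b ≤ π →
      (∀ y ∈ Icc b π, φ 0 - φ y ≤ A * y ^ α) →
      periodicConv K φ a - periodicConv K φ b ≤ C * A * b ^ α * (b - a) ^ α := by
  obtain ⟨C₁, hC₁, hnear⟩ := hK.exists_integral_symmDiffKernel_mul_le_of_abs_le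
  obtain ⟨C₂, hC₂, hfar⟩ := hK.exists_integral_symmDiffKernel_mul_le_of_abs_le_rpow
  refine ⟨2 * C₁ + C₂, by positivity, fun φ hφ a b A ha hab hb hA ↦ ?_⟩
  have hb₀ : 0 < b := ha.trans_lt hab
  have hA₀ : 0 ≤ A := nonneg_of_mul_nonneg_left
    ((sub_nonneg.mpr (hφ.le_apply_zero b)).trans (hA b ⟨le_rfl, hb⟩)) (Real.rpow_pos_of_pos hb₀ α)
  have hcont : Continuous fun y ↦ φ 0 - φ y := by have := hφ.continuous; fun_prop
  have habs (y : ℝ) : |φ 0 - φ y| = φ 0 - φ y := abs_of_nonneg (sub_nonneg.mpr (hφ.le_apply_zero y))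
  have hint (r s : ℝ) : IntervalIntegrable (fun y ↦ symmDiffKernel K a b y * (φ 0 - φ y))
      volume r s :=
    (hK.intervalIntegrable_symmDiffKernel a b r s).mul_continuousOn hcont.continuousOn
  have hnear' (r : ℝ) (hr : r ∈ Icc b π) (hr₂ : r ≤ 2 * b) :
      ∫ y in (0 : ℝ)..r, symmDiffKernel K a b y * (φ 0 - φ y) ≤
        2 * C₁ * A * b ^ α * (b - a) ^ α := by
    have hr₀ : 0 ≤ r := hb₀.le.trans hr.1
    have hM : A * r ^ α ≤ A * (2 * b ^ α) := by
      gcongr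
      calc r ^ α ≤ (2 * b) ^ α := Real.rpow_le_rpow hr₀ hr₂ hK.exponent_pos.le
        _ = 2 ^ α * b ^ α := Real.mul_rpow zero_le_two hb₀.le
        _ ≤ 2 * b ^ α := by
          gcongr
          exact Real.rpow_le_self_of_one_le one_le_two hK.exponent_lt_one.le
    refine (hnear _ hcont a b r (A * (2 * b ^ α)) ha hab hb ⟨hr₀, hr.2⟩ (by positivity)
      fun y hy ↦ ?_).trans_eq (by ring)
    rw [habs]
    linarith [hA r hr, hφ.antitoneOn ⟨hy.1, hy.2.trans hr.2⟩ ⟨hr₀, hr.2⟩ hy.2]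
  rw [hK.periodicConv_sub_eq_integral_symmDiffKernel hφ.continuous hφ.even (φ 0)]
  have hpos : 0 ≤ C₂ * A * b ^ α * (b - a) ^ α := by positivity
  rcases le_total (2 * b) π with hbπ | hbπ
  · rw [← intervalIntegral.integral_add_adjacent_intervals (hint 0 (2 * b)) (hint (2 * b) π)]
    linarith [hnear' (2 * b) ⟨by linarith, hbπ⟩ le_rfl, hfar _ hcont a b A ha hab hbπ hA₀
      fun y hy ↦ (habs y).trans_le (hA y ⟨by linarith [hy.1], hy.2⟩)]
  · linarith [hnear' π ⟨hb, le_rfl⟩ hbπ]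

theorem exists_le_periodicConv_sub (hK : SingularKernel K α) :
    ∃ C > 0, ∀ φ, BellShaped φ → ∀ h, 0 < h → 5 * h ≤ π →
      C * h ^ α * (φ (2 * h) - φ (4 * h)) ≤
        periodicConv K φ (2 * h) - periodicConv K φ (4 * h) := by
  obtain ⟨C, hC, hdiff⟩ := hK.dyadic_difference
  refine ⟨C, hC, fun φ hφ h hh hhπ ↦ ?_⟩
  have hpointwise (z : ℝ) (hz : z ∈ Ioo h (2 * h)) :
      C * h ^ (α - 1) * (φ (2 * h) - φ (4 * h)) ≤
        (K (h - z) - K (h + z)) * (φ (3 * h - z) - φ (3 * h + z)) := by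
    obtain ⟨hz₁, hz₂⟩ := hz
    have hker₁ : K h ≤ K (h - z) := by
      rw [← hK.even (h - z), neg_sub]
      exact hK.strictAntiOn.antitoneOn ⟨by linarith, by linarith⟩ ⟨hh, by linarith⟩ (by linarith)
    have hker₂ : K (h + z) ≤ K (2 * h) :=
      hK.strictAntiOn.antitoneOn ⟨by linarith, by linarith⟩ ⟨by linarith, by linarith⟩
        (by linarith)
    have hφ₁ : φ (2 * h) ≤ φ (3 * h - z) :=
      hφ.antitoneOn ⟨by linarith, by linarith⟩ ⟨by linarith, by linarith⟩ (by linarith)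
    have hφ₂ : φ (3 * h + z) ≤ φ (4 * h) :=
      hφ.antitoneOn ⟨by linarith, by linarith⟩ ⟨by linarith, by linarith⟩ (by linarith)
    have hφ₃ : φ (4 * h) ≤ φ (2 * h) :=
      hφ.antitoneOn ⟨by linarith, by linarith⟩ ⟨by linarith, by linarith⟩ (by linarith)
    have hdyadic := hdiff h ⟨hh, by linarith [Real.pi_le_four]⟩
    have hpos : 0 < C * h ^ (α - 1) := by positivity
    exact mul_le_mul (by linarith) (by linarith) (by linarith) (by linarith)
  have hint := hK.intervalIntegrable_reflection hφ.continuous (3 * h) h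
  calc C * h ^ α * (φ (2 * h) - φ (4 * h))
      = ∫ _ in h..(2 * h), C * h ^ (α - 1) * (φ (2 * h) - φ (4 * h)) := by
        rw [intervalIntegral.integral_const, smul_eq_mul, Real.rpow_sub_one hh.ne']
        field_simp
        ring
    _ ≤ ∫ z in h..(2 * h), (K (h - z) - K (h + z)) * (φ (3 * h - z) - φ (3 * h + z)) :=
        intervalIntegral.integral_mono_on_of_le_Ioo (by linarith) (by simp) (hint _ _) hpointwise
    _ ≤ ∫ z in (0 : ℝ)..π, (K (h - z) - K (h + z)) * (φ (3 * h - z) - φ (3 * h + z)) :=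
        intervalIntegral.integral_mono_interval hh.le (by linarith) (by linarith)
          (hK.ae_nonneg_reflection hφ ⟨by linarith, by linarith⟩ ⟨hh, by linarith⟩) (hint _ _)
    _ = periodicConv K φ (2 * h) - periodicConv K φ (4 * h) := by
        rw [← hK.periodicConv_sub_sub_add_eq_integral hφ.continuous hφ.periodic,
          show 3 * h - h = 2 * h by ring, show 3 * h + h = 4 * h by ring]

end SingularKernel

/-! ### Waves and their crests -/

lemma mul_le_sub_of_monotoneOn_add_sq {G : ℝ → ℝ} {L μ k s t : ℝ} (hk : 0 ≤ k)
    (hG : MonotoneOn (fun s ↦ G s + k * (μ - s) ^ 2) (Icc L μ))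
    (ht : t ∈ Icc L μ) (hs : s ∈ Icc L μ) (hts : t ≤ s) :
    k * ((s - t) * (μ - t)) ≤ G s - G t := by
  have hmono := hG ht hs hts
  have hrest : 0 ≤ k * ((s - t) * (μ - s)) :=
    mul_nonneg hk (mul_nonneg (sub_nonneg.mpr hts) (sub_nonneg.mpr hs.2))
  simp only at hmono
  linarith

lemma sub_le_mul_of_antitoneOn_add_sq {G : ℝ → ℝ} {L μ k s t : ℝ} (hk : 0 ≤ k)
    (hG : AntitoneOn (fun s ↦ G s + k * (μ - s) ^ 2) (Icc L μ))
    (ht : t ∈ Icc L μ) (hs : s ∈ Icc L μ) (hts : t ≤ s) :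
    G s - G t ≤ 2 * k * ((s - t) * (μ - t)) := by
  have hanti := hG ht hs hts
  have hrest : 0 ≤ k * ((s - t) * (s - t)) := mul_nonneg hk (mul_self_nonneg _)
  simp only at hanti
  linarith

namespace BellShaped

variable {φ : ℝ → ℝ} {α c δ L m μ : ℝ}

lemma not_periodic (hφ : BellShaped φ) (hlt : φ π < φ 0) {d : ℝ} (hd : d ∈ Ioc 0 π) :
    ¬ Function.Periodic φ d := fun hper ↦ by
  obtain ⟨y, hy, hπy⟩ := hper.exists_mem_Ico₀ hd.1 π
  have hdy := hφ.antitoneOn ⟨hy.1, hy.2.le.trans hd.2⟩ ⟨hd.1.le, hd.2⟩ hy.2.le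
  have hd₀ : φ d = φ 0 := by simpa using hper 0
  linarith

lemma not_reflection_symmetric (hφ : BellShaped φ) (hlt : φ π < φ 0) (hm : m ∈ Ioo 0 π) :
    ∃ z ∈ Ioc 0 π, φ (m - z) ≠ φ (m + z) := by
  by_contra! hsymm
  have hfold (z : ℝ) : |φ (m - z) - φ (m + z)| = 0 := by
    have hper : Function.Periodic (fun z ↦ |φ (m - z) - φ (m + z)|) (2 * π) := fun z ↦ by
      simp only [← sub_sub, ← add_assoc, hφ.periodic.sub_eq, hφ.periodic _]
    have heven : Function.Even fun z ↦ |φ (m - z) - φ (m + z)| := fun z ↦ by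
      simp only [sub_neg_eq_add, ← sub_eq_add_neg, abs_sub_comm]
    have harccos := eq_of_cos_eq hper heven
      (Real.cos_arccos (Real.neg_one_le_cos z) (Real.cos_le_one z)).symm
    rcases (Real.arccos_nonneg (cos z)).eq_or_lt with hzero | hpos
    · simpa [← hzero] using harccos
    · simpa [hsymm _ ⟨hpos, Real.arccos_le_pi _⟩] using harccos
  have hper : Function.Periodic φ (2 * m) := fun x ↦ by
    have hx := sub_eq_zero.mp (abs_eq_zero.mp (hfold (x + m)))
    rw [sub_add_cancel_right, hφ.even] at hx
    rw [hx]
    ring_nf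
  rcases le_total (2 * m) π with hle | hle
  · exact hφ.not_periodic hlt ⟨by linarith [hm.1], hle⟩ hper
  · refine hφ.not_periodic hlt (d := 2 * π - 2 * m) ⟨by linarith [hm.2], by linarith⟩ fun x ↦ ?_
    rw [← add_sub_assoc, hper.sub_eq, hφ.periodic]

lemma exists_lt_apply (hφ : BellShaped φ) (hL : L < φ 0) : ∃ δ ∈ Ioc 0 π, L < φ δ := by
  have hnear : ∀ᶠ x in 𝓝[>] 0, L < φ x :=
    (hφ.continuous.continuousAt.eventually (lt_mem_nhds hL)).filter_mono nhdsWithin_le_nhds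
  obtain ⟨δ, hδ, hmem⟩ := (hnear.and (Ioc_mem_nhdsGT Real.pi_pos)).exists
  exact ⟨δ, hmem, hδ⟩

lemma exists_rpow_le_of_rpow_le (hφ : BellShaped φ) (hδ : δ ∈ Ioc 0 π) (hc : 0 < c)
    (hlow : ∀ x ∈ Icc 0 δ, c * x ^ α ≤ μ - φ x) :
    ∃ C > 0, ∀ x ∈ Icc 0 π, C * x ^ α ≤ μ - φ x := by
  have hratio : 0 < δ / π := div_pos hδ.1 Real.pi_pos
  refine ⟨c * (δ / π) ^ α, by positivity, fun x hx ↦ ?_⟩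
  have hle : δ / π * x ≤ x :=
    mul_le_of_le_one_left hx.1 ((div_le_one Real.pi_pos).mpr hδ.2)
  have hδx : δ / π * x ≤ δ := by
    rw [div_mul_eq_mul_div, div_le_iff₀ Real.pi_pos]
    exact mul_le_mul_of_nonneg_left hx.2 hδ.1.le
  have hnonneg : 0 ≤ δ / π * x := mul_nonneg hratio.le hx.1
  rw [mul_assoc, ← Real.mul_rpow hratio.le hx.1]
  exact (hlow _ ⟨hnonneg, hδx⟩).trans
    (sub_le_sub_left (hφ.antitoneOn ⟨hnonneg, hle.trans hx.2⟩ hx hle) μ)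

lemma exists_sub_le_div_mul_rpow (hφ : BellShaped φ) (α : ℝ) {x : ℝ} (hx : x ∈ Ioc 0 π) :
    ∃ y ∈ Icc x π, ∀ z ∈ Icc x π, φ 0 - φ z ≤ (φ 0 - φ y) / y ^ α * z ^ α := by
  have hpos (z : ℝ) (hz : z ∈ Icc x π) : 0 < z ^ α := Real.rpow_pos_of_pos (hx.1.trans_le hz.1) α
  have hcont : ContinuousOn (fun z ↦ (φ 0 - φ z) / z ^ α) (Icc x π) :=
    (continuousOn_const.sub hφ.continuous.continuousOn).div
      (continuousOn_id.rpow_const fun z hz ↦ Or.inl (hx.1.trans_le hz.1).ne')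
      fun z hz ↦ (hpos z hz).ne'
  obtain ⟨y, hy, hmax⟩ := isCompact_Icc.exists_isMaxOn ⟨x, le_rfl, hx.2⟩ hcont
  exact ⟨y, hy, fun z hz ↦ (div_le_iff₀ (hpos z hz)).mp (hmax hz)⟩

end BellShaped

/-- A nonconstant bell-shaped solution of `K * φ = G ∘ φ + const`; the equation is expressed
through increments so that the constant need not be named. -/
structure Wave (K G φ : ℝ → ℝ) : Prop extends BellShaped φ where
  increment (a b : ℝ) : periodicConv K φ a - periodicConv K φ b = G (φ a) - G (φ b)
  apply_pi_lt : φ π < φ 0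

namespace Wave

variable {K G φ : ℝ → ℝ} {α c k L μ : ℝ}

lemma apply_sub_eq_apply_add (hK : SingularKernel K α) (W : Wave K G φ) {m h : ℝ}
    (hm : m ∈ Icc 0 π) (hh : h ∈ Ioo 0 π) (heq : φ (m - h) = φ (m + h)) {z : ℝ}
    (hz : z ∈ Ioc 0 π) : φ (m - z) = φ (m + z) := by
  have hφ := W.continuous
  have hzero : ∫ z in (0 : ℝ)..π, (K (h - z) - K (h + z)) * (φ (m - z) - φ (m + z)) = 0 := by
    rw [← hK.periodicConv_sub_sub_add_eq_integral hφ W.periodic, W.increment, heq, sub_self]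
  rw [intervalIntegral.integral_eq_zero_iff_of_le_of_nonneg_ae Real.pi_pos.le
    (hK.ae_nonneg_reflection W.toBellShaped hm hh)
    (hK.intervalIntegrable_reflection hφ m h 0 π)] at hzero
  have hae : (fun z ↦ φ (m - z)) =ᵐ[volume.restrict (Ioc 0 π)] fun z ↦ φ (m + z) := by
    filter_upwards [ae_restrict_mem measurableSet_Ioc, ae_restrict_of_ae (Measure.ae_ne _ h),
      ae_restrict_of_ae (Measure.ae_ne _ π), hzero] with z hz hzh hzπ hprod
    have hker := hK.add_lt_sub hh ⟨hz.1, hz.2.lt_of_ne hzπ⟩ hzh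
    exact sub_eq_zero.mp ((mul_eq_zero.mp hprod).resolve_left (sub_pos.mpr hker).ne')
  exact Measure.eqOn_Ioc_of_ae_eq volume hae (by fun_prop) (by fun_prop) hz

theorem strictAntiOn (hK : SingularKernel K α) (W : Wave K G φ) : StrictAntiOn φ (Ioo 0 π) := by
  intro a ha b hb hab
  refine (W.antitoneOn (Ioo_subset_Icc_self ha) (Ioo_subset_Icc_self hb) hab.le).lt_of_ne
    fun heq ↦ ?_
  have hm : (a + b) / 2 ∈ Ioo 0 π := ⟨by linarith [ha.1, hb.1], by linarith [ha.2, hb.2]⟩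
  obtain ⟨z, hz, hne⟩ := W.not_reflection_symmetric W.apply_pi_lt hm
  refine hne (W.apply_sub_eq_apply_add hK (Ioo_subset_Icc_self hm) (h := (b - a) / 2)
    ⟨by linarith, by linarith [ha.1, hb.2]⟩ ?_ hz)
  rw [show (a + b) / 2 - (b - a) / 2 = a by ring, show (a + b) / 2 + (b - a) / 2 = b by ring, heq]

theorem strictMonoOn (hK : SingularKernel K α) (W : Wave K G φ) :
    StrictMonoOn φ (Ioo (-π) 0) := fun x hx y hy hxy ↦ by
  rw [← W.even x, ← W.even y]
  exact W.strictAntiOn hK ⟨neg_pos.mpr hy.2, neg_lt.mp hy.1⟩ ⟨neg_pos.mpr hx.2, neg_lt.mp hx.1⟩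
    (neg_lt_neg hxy)

lemma exists_rpow_le_of_apply_zero_eq (hK : SingularKernel K α) (W : Wave K G φ) (hk : 0 < k)
    (hL : L < μ) (hG : AntitoneOn (fun s ↦ G s + k * (μ - s) ^ 2) (Icc L μ)) (hμ : φ 0 = μ) :
    ∃ C > 0, ∀ x ∈ Icc 0 π, C * x ^ α ≤ μ - φ x := by
  obtain ⟨C, hC, hconv⟩ := hK.exists_le_periodicConv_sub
  obtain ⟨δ, hδ, hLδ⟩ := W.exists_lt_apply (hμ ▸ hL)
  refine W.exists_rpow_le_of_rpow_le (δ := δ / 2) (c := C * (1 / 4) ^ α / (2 * k))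
    ⟨half_pos hδ.1, (half_le_self hδ.1.le).trans hδ.2⟩ (by positivity) fun x hx ↦ ?_
  rcases hx.1.eq_or_lt with rfl | hx₀
  · rw [Real.zero_rpow hK.exponent_pos.ne', mul_zero, hμ, sub_self]
  obtain ⟨h, rfl⟩ : ∃ h, x = 4 * h := ⟨x / 4, by ring⟩
  have hh : 0 < h := by linarith
  have hhπ : 5 * h ≤ π := by linarith [hx.2, hδ.2]
  have hlt : φ (4 * h) < φ (2 * h) :=
    W.strictAntiOn hK ⟨by linarith, by linarith⟩ ⟨by linarith, by linarith⟩ (by linarith)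
  have hmem : φ (4 * h) ∈ Icc L μ :=
    ⟨hLδ.le.trans (W.antitoneOn ⟨hx.1, by linarith⟩ ⟨hδ.1.le, hδ.2⟩ (by linarith [hx.2])),
      hμ ▸ W.le_apply_zero _⟩
  have hmem' : φ (2 * h) ∈ Icc L μ := ⟨hmem.1.trans hlt.le, hμ ▸ W.le_apply_zero _⟩
  have hgap : C * h ^ α ≤ 2 * k * (μ - φ (4 * h)) := by
    refine le_of_mul_le_mul_right ?_ (sub_pos.mpr hlt)
    calc C * h ^ α * (φ (2 * h) - φ (4 * h))
        ≤ G (φ (2 * h)) - G (φ (4 * h)) :=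
          (hconv φ W.toBellShaped h hh hhπ).trans_eq (W.increment _ _)
      _ ≤ 2 * k * ((φ (2 * h) - φ (4 * h)) * (μ - φ (4 * h))) :=
          sub_le_mul_of_antitoneOn_add_sq hk.le hG hmem hmem' hlt.le
      _ = 2 * k * (μ - φ (4 * h)) * (φ (2 * h) - φ (4 * h)) := by ring
  rw [div_mul_eq_mul_div, div_le_iff₀ (by positivity), mul_assoc,
    ← Real.mul_rpow (by positivity) hx.1, show 1 / 4 * (4 * h) = h by ring]
  linarith

theorem exists_rpow_le (hK : SingularKernel K α) (W : Wave K G φ) (hk : 0 < k) (hL : L < μ)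
    (hG : AntitoneOn (fun s ↦ G s + k * (μ - s) ^ 2) (Icc L μ)) (hμ : φ 0 ≤ μ) :
    ∃ C > 0, ∀ x ∈ Icc 0 π, C * x ^ α ≤ μ - φ x := by
  rcases hμ.eq_or_lt with heq | hlt
  · exact W.exists_rpow_le_of_apply_zero_eq hK hk hL hG heq
  · refine W.exists_rpow_le_of_rpow_le (δ := 1) (c := μ - φ 0)
      ⟨one_pos, by linarith [Real.pi_gt_three]⟩ (sub_pos.mpr hlt) fun x hx ↦ ?_
    calc (μ - φ 0) * x ^ α ≤ μ - φ 0 := mul_le_of_le_one_right (sub_nonneg.mpr hμ)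
          (Real.rpow_le_one hx.1 hx.2 hK.exponent_pos.le)
      _ ≤ μ - φ x := sub_le_sub_left (W.le_apply_zero x) μ

lemma exists_sub_le_of_sub_le_div_mul_rpow (hK : SingularKernel K α) (W : Wave K G φ)
    (hk : 0 < k) (hG : MonotoneOn (fun s ↦ G s + k * (μ - s) ^ 2) (Icc L μ)) (hμ : φ 0 ≤ μ) :
    ∃ A > 0, ∀ y ∈ Ioc 0 π, L ≤ φ y →
      (∀ z ∈ Icc y π, φ 0 - φ z ≤ (φ 0 - φ y) / y ^ α * z ^ α) →
      (φ 0 - φ y) / y ^ α ≤ A := by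
  obtain ⟨C, hC, hconv⟩ := hK.exists_periodicConv_sub_le
  refine ⟨C / k, by positivity, fun y hy hLy hmax ↦ ?_⟩
  have hyα : 0 < y ^ α := Real.rpow_pos_of_pos hy.1 α
  rcases (W.le_apply_zero y).eq_or_lt with heq | hlt
  · rw [heq, sub_self, zero_div]
    positivity
  have hd : 0 < φ 0 - φ y := sub_pos.mpr hlt
  have hsq : k * (φ 0 - φ y) * (φ 0 - φ y) ≤ C * y ^ α * (φ 0 - φ y) := by
    calc k * (φ 0 - φ y) * (φ 0 - φ y) ≤ k * ((φ 0 - φ y) * (μ - φ y)) := by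
          rw [mul_assoc]
          gcongr
      _ ≤ G (φ 0) - G (φ y) := mul_le_sub_of_monotoneOn_add_sq hk.le hG
          ⟨hLy, hlt.le.trans hμ⟩ ⟨hLy.trans hlt.le, hμ⟩ hlt.le
      _ ≤ C * ((φ 0 - φ y) / y ^ α) * y ^ α * (y - 0) ^ α :=
          (W.increment 0 y).symm.trans_le
            (hconv φ W.toBellShaped 0 y _ le_rfl hy.1 hy.2 hmax)
      _ = C * y ^ α * (φ 0 - φ y) := by
          rw [sub_zero]
          field_simp
  rw [div_le_div_iff₀ hyα hk]
  linarith [le_of_mul_le_mul_right hsq hd]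

theorem exists_apply_zero_sub_le (hK : SingularKernel K α) (W : Wave K G φ) (hk : 0 < k)
    (hG : MonotoneOn (fun s ↦ G s + k * (μ - s) ^ 2) (Icc L μ)) (hμ : φ 0 ≤ μ) (hL : L < φ 0) :
    ∃ A > 0, ∀ x ∈ Ioc 0 π, φ 0 - φ x ≤ A * x ^ α := by
  obtain ⟨A, hA, hcrest⟩ := W.exists_sub_le_of_sub_le_div_mul_rpow hK hk hG hμ
  obtain ⟨δ, hδ, hLδ⟩ := W.exists_lt_apply hL
  have hδα : 0 < δ ^ α := Real.rpow_pos_of_pos hδ.1 α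
  refine ⟨max A ((φ 0 - φ π) / δ ^ α), lt_max_of_lt_left hA, fun x hx ↦ ?_⟩
  obtain ⟨y, hy, hmax⟩ := W.exists_sub_le_div_mul_rpow α hx
  have hy₀ : 0 < y := hx.1.trans_le hy.1
  refine (hmax x ⟨le_rfl, hx.2⟩).trans
    (mul_le_mul_of_nonneg_right ?_ (Real.rpow_nonneg hx.1.le α))
  rcases le_total δ y with hδy | hyδ
  · refine le_max_of_le_right (div_le_div₀ (sub_nonneg.mpr W.apply_pi_lt.le)
      (sub_le_sub_left (W.apply_pi_le y) _) hδα ?_)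
    exact Real.rpow_le_rpow hδ.1.le hδy hK.exponent_pos.le
  · refine le_max_of_le_left (hcrest y ⟨hy₀, hy.2⟩ ?_ fun z hz ↦ hmax z ⟨hy.1.trans hz.1, hz.2⟩)
    exact hLδ.le.trans (W.antitoneOn ⟨hy₀.le, hy.2⟩ ⟨hδ.1.le, hδ.2⟩ hyδ)

theorem exists_sub_le (hK : SingularKernel K α) (W : Wave K G φ) (hk : 0 < k)
    (hG : MonotoneOn (fun s ↦ G s + k * (μ - s) ^ 2) (Icc L μ)) (hμ : φ 0 ≤ μ) (hL : L < φ 0)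
    (hc : 0 < c) (hlow : ∀ x ∈ Icc 0 π, c * x ^ α ≤ μ - φ x) :
    ∃ C > 0, ∀ a b, 0 ≤ a → a ≤ b → b ≤ π → L ≤ φ b → φ a - φ b ≤ C * (b - a) ^ α := by
  obtain ⟨C, hC, hconv⟩ := hK.exists_periodicConv_sub_le
  obtain ⟨A, hA, hup⟩ := W.exists_apply_zero_sub_le hK hk hG hμ hL
  refine ⟨C * A / (k * c), by positivity, fun a b ha hab hb hLb ↦ ?_⟩
  rcases hab.eq_or_lt with rfl | hlt
  · rw [sub_self, sub_self, Real.zero_rpow hK.exponent_pos.ne', mul_zero]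
  have hb₀ : 0 < b := ha.trans_lt hlt
  have hbα : 0 < b ^ α := Real.rpow_pos_of_pos hb₀ α
  have hle : φ b ≤ φ a := W.antitoneOn ⟨ha, hab.trans hb⟩ ⟨hb₀.le, hb⟩ hab
  have hmem (x : ℝ) (hx : L ≤ φ x) : φ x ∈ Icc L μ := ⟨hx, (W.le_apply_zero x).trans hμ⟩
  rw [div_mul_eq_mul_div, le_div_iff₀ (by positivity)]
  refine le_of_mul_le_mul_right ?_ hbα
  calc (φ a - φ b) * (k * c) * b ^ α = k * ((φ a - φ b) * (c * b ^ α)) := by ring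
    _ ≤ k * ((φ a - φ b) * (μ - φ b)) := by
        have := sub_nonneg.mpr hle
        gcongr
        exact hlow b ⟨hb₀.le, hb⟩
    _ ≤ G (φ a) - G (φ b) := mul_le_sub_of_monotoneOn_add_sq hk.le hG (hmem b hLb)
        (hmem a (hLb.trans hle)) hle
    _ ≤ C * A * b ^ α * (b - a) ^ α :=
        (W.increment a b).symm.trans_le (hconv φ W.toBellShaped a b A ha hlt hb
          fun y hy ↦ hup y ⟨hb₀.trans_le hy.1, hy.2⟩)
    _ = C * A * (b - a) ^ α * b ^ α := by ring

end Wave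

/-! ### From one crest to global Hölder continuity -/

namespace BellShaped

variable {φ : ℝ → ℝ} {α C D : ℝ}

lemma apply_sub_pi (hφ : BellShaped φ) (x : ℝ) : φ (x - π) = φ (π - x) := by
  rw [← neg_sub, hφ.even]

lemma neg_comp_pi_sub (hφ : BellShaped φ) : BellShaped fun x ↦ -φ (π - x) where
  continuous := by
    have := hφ.continuous
    fun_prop
  periodic x := by
    simp only [← sub_sub, hφ.periodic.sub_eq]
  even x := by
    beta_reduce
    rw [← hφ.apply_sub_pi x, ← hφ.periodic (x - π), show x - π + 2 * π = π - -x by ring]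
  antitoneOn x hx y hy hxy := neg_le_neg <|
    hφ.antitoneOn ⟨sub_nonneg.mpr hy.2, sub_le_self π hy.1⟩
      ⟨sub_nonneg.mpr hx.2, sub_le_self π hx.1⟩ (sub_le_sub_left hxy π)

lemma abs_sub_le_mul_rpow (hφ : BellShaped φ) (hα : 0 ≤ α) (hC : 0 ≤ C)
    (hhalf : ∀ a b, 0 ≤ a → a ≤ b → b ≤ π → φ a - φ b ≤ C * (b - a) ^ α) (x y : ℝ) :
    |φ x - φ y| ≤ C * |x - y| ^ α := by
  have hfold (z : ℝ) : φ z = φ ‖(z : AddCircle (2 * π))‖ :=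
    eq_of_cos_eq hφ.periodic hφ.even <| by
      rw [AddCircle.norm_eq, Real.cos_abs, Real.cos_sub_int_mul_two_pi]
  have hle_pi (z : ℝ) : ‖(z : AddCircle (2 * π))‖ ≤ π := by
    have := AddCircle.norm_le_half_period (2 * π) (x := (z : AddCircle (2 * π)))
      Real.two_pi_pos.ne'
    rw [abs_of_pos Real.two_pi_pos] at this
    linarith
  have hdist : |‖(x : AddCircle (2 * π))‖ - ‖(y : AddCircle (2 * π))‖| ≤ |x - y| := by
    refine (abs_norm_sub_norm_le _ _).trans ?_
    rw [← AddCircle.coe_sub]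
    exact QuotientAddGroup.norm_mk_le_norm (S := AddSubgroup.zmultiples (2 * π)) (m := x - y)
  have hordered {a b : ℝ} (ha : 0 ≤ a) (hab : a ≤ b) (hb : b ≤ π) :
      |φ a - φ b| ≤ C * |a - b| ^ α := by
    rw [abs_of_nonneg (sub_nonneg.mpr (hφ.antitoneOn ⟨ha, hab.trans hb⟩ ⟨ha.trans hab, hb⟩ hab)),
      abs_sub_comm, abs_of_nonneg (sub_nonneg.mpr hab)]
    exact hhalf a b ha hab hb
  calc |φ x - φ y|
      ≤ C * |‖(x : AddCircle (2 * π))‖ - ‖(y : AddCircle (2 * π))‖| ^ α := by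
        rw [hfold x, hfold y]
        rcases le_total ‖(x : AddCircle (2 * π))‖ ‖(y : AddCircle (2 * π))‖ with h | h
        · exact hordered (norm_nonneg _) h (hle_pi y)
        · rw [abs_sub_comm, abs_sub_comm ‖(x : AddCircle (2 * π))‖]
          exact hordered (norm_nonneg _) h (hle_pi x)
    _ ≤ C * |x - y| ^ α := by gcongr

lemma sub_le_add_mul_rpow (hφ : BellShaped φ) (hα : 0 ≤ α) (hC : 0 ≤ C) (hD : 0 ≤ D)
    (hpos : ∀ a b, 0 ≤ a → a ≤ b → b ≤ π → 0 ≤ φ b → φ a - φ b ≤ C * (b - a) ^ α)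
    (hneg : ∀ a b, 0 ≤ a → a ≤ b → b ≤ π → φ a ≤ 0 → φ a - φ b ≤ D * (b - a) ^ α)
    {a b : ℝ} (ha : 0 ≤ a) (hab : a ≤ b) (hb : b ≤ π) :
    φ a - φ b ≤ (C + D) * (b - a) ^ α := by
  rcases le_total 0 (φ b) with hφb | hφb
  · exact (hpos a b ha hab hb hφb).trans (by gcongr; linarith)
  rcases le_total (φ a) 0 with hφa | hφa
  · exact (hneg a b ha hab hb hφa).trans (by gcongr; linarith)
  obtain ⟨e, ⟨hae, heb⟩, he⟩ : (0 : ℝ) ∈ φ '' Icc a b :=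
    intermediate_value_Icc' hab hφ.continuous.continuousOn ⟨hφb, hφa⟩
  calc φ a - φ b = φ a - φ e + (φ e - φ b) := by ring
    _ ≤ C * (e - a) ^ α + D * (b - e) ^ α :=
      add_le_add (hpos a e ha hae (heb.trans hb) he.ge) (hneg e b (ha.trans hae) heb hb he.le)
    _ ≤ C * (b - a) ^ α + D * (b - a) ^ α := by
      gcongr
    _ = (C + D) * (b - a) ^ α := (add_mul _ _ _).symm

end BellShaped

namespace Wave

variable {K G φ : ℝ → ℝ} {α k l μ : ℝ}

theorem neg_comp_pi_sub (hK : SingularKernel K α) (W : Wave K G φ) (hG : Function.Odd G) :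
    Wave K G fun x ↦ -φ (π - x) where
  toBellShaped := W.toBellShaped.neg_comp_pi_sub
  increment a b := by
    have hconv (x : ℝ) : periodicConv K (fun y ↦ -φ (π - y)) x = -periodicConv K φ (x - π) := by
      rw [hK.periodicConv_eq_integral_comp_add W.toBellShaped.neg_comp_pi_sub.periodic π,
        periodicConv, ← intervalIntegral.integral_neg]
      simp only [sub_add_cancel_left, W.even _, mul_neg]
    rw [hconv, hconv, hG, hG, ← W.apply_sub_pi a, ← W.apply_sub_pi b]
    linarith [W.increment (a - π) (b - π)]
  apply_pi_lt := by simpa using W.apply_pi_lt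

theorem exists_sub_le_of_odd (hK : SingularKernel K α) (W : Wave K G φ) (hodd : Function.Odd G)
    (hk : 0 < k) (hmono : MonotoneOn (fun s ↦ G s + k * (μ - s) ^ 2) (Icc 0 μ))
    (hl : 0 < l) (hanti : AntitoneOn (fun s ↦ G s + l * (μ - s) ^ 2) (Icc 0 μ))
    (hμ : φ 0 ≤ μ) (hpos : 0 < φ 0) (hneg : φ π < 0) (hlow : -μ ≤ φ π) :
    ∃ C > 0, ∀ a b, 0 ≤ a → a ≤ b → b ≤ π → φ a - φ b ≤ C * (b - a) ^ α := by
  have V := W.neg_comp_pi_sub hK hodd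
  have hμ' : -φ (π - 0) ≤ μ := by
    rw [sub_zero]
    linarith
  have hpos' : 0 < -φ (π - 0) := by simpa using hneg
  have hμ₀ : 0 < μ := hpos.trans_le hμ
  obtain ⟨c, hc, hW⟩ := W.exists_rpow_le hK hl hμ₀ hanti hμ
  obtain ⟨d, hd, hV⟩ := V.exists_rpow_le hK hl hμ₀ hanti hμ'
  obtain ⟨C, hC, hCle⟩ := W.exists_sub_le hK hk hmono hμ hpos hc hW
  obtain ⟨D, hD, hDle⟩ := V.exists_sub_le hK hk hmono hμ' hpos' hd hV
  refine ⟨C + D, add_pos hC hD, fun a b ha hab hb ↦ ?_⟩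
  refine W.sub_le_add_mul_rpow hK.exponent_pos.le hC.le hD.le hCle (fun a b ha hab hb hφa ↦ ?_)
    ha hab hb
  have hreflected := hDle (π - b) (π - a) (sub_nonneg.mpr hb) (sub_le_sub_left hab π)
    (sub_le_self π ha) (by simpa using hφa)
  simp only [sub_sub_cancel, sub_sub_sub_cancel_left] at hreflected
  linarith

end Wave

/-! ### The nonlinearities near the critical height -/

section CriticalHeight

variable {n : ℝ → ℝ} {c k L p q s μ : ℝ}

lemma min_one_mul_one_sub_le_one_sub_rpow (hq : 0 ≤ q) (hs : s ∈ Icc 0 1) :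
    min 1 q * (1 - s) ≤ 1 - s ^ q := by
  rcases le_total 1 q with h | h
  · have := Real.rpow_le_rpow_of_exponent_ge' hs.1 hs.2 zero_le_one h
    rw [Real.rpow_one] at this
    rw [min_eq_left h]
    linarith
  · have := rpow_one_add_le_one_add_mul_self (s := s - 1) (by linarith [hs.1]) hq h
    rw [add_sub_cancel] at this
    rw [min_eq_right h]
    linarith

lemma one_sub_rpow_le_max_one_mul_one_sub (hq : 0 ≤ q) (hs : s ∈ Icc 0 1) :
    1 - s ^ q ≤ max 1 q * (1 - s) := by
  rcases le_total 1 q with h | h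
  · have := one_add_mul_self_le_rpow_one_add (s := s - 1) (by linarith [hs.1]) h
    rw [add_sub_cancel] at this
    rw [max_eq_right h]
    linarith
  · have := Real.rpow_le_rpow_of_exponent_ge' hs.1 hs.2 hq h
    rw [Real.rpow_one] at this
    rw [max_eq_left h]
    linarith

lemma rpow_sub_rpow_mem_Icc (hq : 0 ≤ q) (hμ : 0 < μ) (hs : s ∈ Icc 0 μ) :
    μ ^ q - s ^ q ∈
      Icc (min 1 q * (μ ^ q / μ) * (μ - s)) (max 1 q * (μ ^ q / μ) * (μ - s)) := by
  have hr : s / μ ∈ Icc 0 1 := ⟨div_nonneg hs.1 hμ.le, (div_le_one hμ).mpr hs.2⟩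
  have hμq : 0 < μ ^ q := Real.rpow_pos_of_pos hμ q
  have hscale (a : ℝ) : a * (μ ^ q / μ) * (μ - s) = μ ^ q * (a * (1 - s / μ)) := by
    field_simp
  have hdiff : μ ^ q - s ^ q = μ ^ q * (1 - (s / μ) ^ q) := by
    rw [Real.div_rpow hs.1 hμ.le]
    field_simp
  rw [hscale, hscale, hdiff]
  exact ⟨mul_le_mul_of_nonneg_left (min_one_mul_one_sub_le_one_sub_rpow hq hr) hμq.le,
    mul_le_mul_of_nonneg_left (one_sub_rpow_le_max_one_mul_one_sub hq hr) hμq.le⟩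

lemma hasDerivAt_mul_sub_rpow_add_sq (hp : 1 ≤ p) (c k μ s : ℝ) :
    HasDerivAt (fun s ↦ c * s - s ^ p + k * (μ - s) ^ 2)
      (c - p * s ^ (p - 1) - 2 * k * (μ - s)) s := by
  have hlin : HasDerivAt (fun s ↦ c * s) c s := by
    simpa using (hasDerivAt_id s).const_mul c
  have hsq : HasDerivAt (fun s ↦ k * (μ - s) ^ 2) (-(2 * k * (μ - s))) s :=
    ((((hasDerivAt_id s).const_sub μ).pow 2).const_mul k).congr_deriv (by simp; ring)
  exact (hlin.sub (Real.hasDerivAt_rpow_const (Or.inr hp))).add hsq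

lemma exists_monotoneOn_sub_add_sq (hp : 1 < p) (hμ : 0 < μ) (hc : p * μ ^ (p - 1) = c)
    (hn : EqOn n (fun s ↦ s ^ p) (Icc 0 μ)) :
    ∃ k > 0, MonotoneOn (fun s ↦ c * s - n s + k * (μ - s) ^ 2) (Icc 0 μ) := by
  have hp₀ : 0 < p := one_pos.trans hp
  have hq : 0 < p - 1 := sub_pos.mpr hp
  let k := p * (min 1 (p - 1) * (μ ^ (p - 1) / μ)) / 2
  have hderiv := hasDerivAt_mul_sub_rpow_add_sq hp.le c k μ
  refine ⟨k, by positivity, MonotoneOn.congr (f₁ := fun s ↦ c * s - s ^ p + k * (μ - s) ^ 2) ?_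
    fun s hs ↦ by rw [hn hs]⟩
  refine monotoneOn_of_deriv_nonneg (convex_Icc _ _)
    (fun s _ ↦ (hderiv s).continuousAt.continuousWithinAt)
    (fun s _ ↦ (hderiv s).differentiableAt.differentiableWithinAt) fun s hs ↦ ?_
  rw [(hderiv s).deriv, ← hc]
  have hbound := mul_le_mul_of_nonneg_left
    (rpow_sub_rpow_mem_Icc hq.le hμ (interior_subset hs)).1 hp₀.le
  simp only [k]
  linarith

lemma exists_antitoneOn_sub_add_sq (hp : 1 < p) (hμ : 0 < μ) (hc : p * μ ^ (p - 1) = c)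
    (hn : EqOn n (fun s ↦ s ^ p) (Icc 0 μ)) :
    ∃ k > 0, AntitoneOn (fun s ↦ c * s - n s + k * (μ - s) ^ 2) (Icc 0 μ) := by
  have hp₀ : 0 < p := one_pos.trans hp
  have hq : 0 < p - 1 := sub_pos.mpr hp
  let k := p * (max 1 (p - 1) * (μ ^ (p - 1) / μ)) / 2
  have hderiv := hasDerivAt_mul_sub_rpow_add_sq hp.le c k μ
  refine ⟨k, by positivity, AntitoneOn.congr (f₁ := fun s ↦ c * s - s ^ p + k * (μ - s) ^ 2) ?_
    fun s hs ↦ by rw [hn hs]⟩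
  refine antitoneOn_of_deriv_nonpos (convex_Icc _ _)
    (fun s _ ↦ (hderiv s).continuousAt.continuousWithinAt)
    (fun s _ ↦ (hderiv s).differentiableAt.differentiableWithinAt) fun s hs ↦ ?_
  rw [(hderiv s).deriv, ← hc]
  have hbound := mul_le_mul_of_nonneg_left
    (rpow_sub_rpow_mem_Icc hq.le hμ (interior_subset hs)).2 hp₀.le
  simp only [k]
  linarith

lemma monotoneOn_add_sq_of_le {G : ℝ → ℝ} {k l : ℝ} (hlk : l ≤ k)
    (hG : MonotoneOn (fun s ↦ G s + k * (μ - s) ^ 2) (Icc L μ)) :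
    MonotoneOn (fun s ↦ G s + l * (μ - s) ^ 2) (Icc L μ) := fun s hs t ht hst ↦ by
  have hmono := hG hs ht hst
  have hsq : (k - l) * (μ - t) ^ 2 ≤ (k - l) * (μ - s) ^ 2 :=
    mul_le_mul_of_nonneg_left
      (pow_le_pow_left₀ (sub_nonneg.mpr ht.2) (sub_le_sub_left hst μ) 2) (sub_nonneg.mpr hlk)
  simp only at hmono ⊢
  linarith

lemma nAbs_of_nonneg (p : ℝ) (hs : 0 ≤ s) : nAbs p s = s ^ p := by
  rw [nAbs, abs_of_nonneg hs]

lemma monotoneOn_sub_nAbs_add_sq (hp : 0 ≤ p) (hk : 0 ≤ k) (hc : 2 * k * (μ - L) ≤ c) :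
    MonotoneOn (fun s ↦ c * s - nAbs p s + k * (μ - s) ^ 2) (Icc L 0) := fun s hs t ht hst ↦ by
  have hn : nAbs p t ≤ nAbs p s := by
    refine Real.rpow_le_rpow (abs_nonneg t) ?_ hp
    rw [abs_of_nonpos ht.2, abs_of_nonpos hs.2]
    exact neg_le_neg hst
  have hsq : k * (μ - s) ^ 2 - k * (μ - t) ^ 2 ≤ c * (t - s) := by
    calc k * (μ - s) ^ 2 - k * (μ - t) ^ 2 = 2 * k * (μ - (s + t) / 2) * (t - s) := by ring
      _ ≤ 2 * k * (μ - L) * (t - s) := by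
        have := sub_nonneg.mpr hst
        gcongr
        linarith [hs.1, ht.1]
      _ ≤ c * (t - s) := mul_le_mul_of_nonneg_right hc (sub_nonneg.mpr hst)
  simp only
  linarith

lemma exists_monotoneOn_sub_nAbs_add_sq (hp : 1 < p) (hμ : 0 < μ) (hc : p * μ ^ (p - 1) = c)
    (hL : L ≤ 0) :
    ∃ k > 0, MonotoneOn (fun s ↦ c * s - nAbs p s + k * (μ - s) ^ 2) (Icc L μ) := by
  obtain ⟨k, hk, hpos⟩ := exists_monotoneOn_sub_add_sq hp hμ hc
    fun s hs ↦ nAbs_of_nonneg p hs.1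
  have hc₀ : 0 < c := hc ▸ by positivity
  have hμL : 0 < μ - L := by linarith
  let l := min k (c / (2 * (μ - L)))
  have hl : 0 < l := lt_min hk (by positivity)
  refine ⟨l, hl, ?_⟩
  rw [← Icc_union_Icc_eq_Icc hL hμ.le]
  refine (monotoneOn_sub_nAbs_add_sq (by linarith) hl.le ?_).union_right
    (monotoneOn_add_sq_of_le (min_le_left _ _) hpos) (isGreatest_Icc hL) (isLeast_Icc hμ.le)
  calc 2 * l * (μ - L) = l * (2 * (μ - L)) := by ring
    _ ≤ c := (le_div_iff₀ (by positivity)).mp (min_le_right _ _)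

lemma nSgn_of_nonneg (hp : p ≠ 0) (hs : 0 ≤ s) : nSgn p s = s ^ p := by
  rw [nSgn, abs_of_nonneg hs, ← Real.rpow_one_add' hs (by simpa), add_sub_cancel]

lemma eqOn_rpow_of_eq_nAbs_or_eq_nSgn (hp : p ≠ 0) (hn : n = nAbs p ∨ n = nSgn p) :
    EqOn n (fun s ↦ s ^ p) (Ici 0) := fun s hs ↦ by
  rcases hn with rfl | rfl
  · exact nAbs_of_nonneg p hs
  · exact nSgn_of_nonneg hp hs

lemma odd_nSgn (p : ℝ) : Function.Odd (nSgn p) := fun s ↦ by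
  rw [nSgn, nSgn, abs_neg, neg_mul]

end CriticalHeight

namespace Wave

variable {K φ : ℝ → ℝ} {α c p μ : ℝ}

theorem exists_sub_le_of_nAbs (hK : SingularKernel K α)
    (W : Wave K (fun s ↦ c * s - nAbs p s) φ) (hp : 1 < p) (hμ : 0 < μ)
    (hc : p * μ ^ (p - 1) = c) (hmax : φ 0 ≤ μ) (hneg : φ π < 0) :
    ∃ C > 0, ∀ a b, 0 ≤ a → a ≤ b → b ≤ π → φ a - φ b ≤ C * (b - a) ^ α := by
  obtain ⟨l, hl, hanti⟩ := exists_antitoneOn_sub_add_sq hp hμ hc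
    fun s hs ↦ nAbs_of_nonneg p hs.1
  obtain ⟨k, hk, hmono⟩ := exists_monotoneOn_sub_nAbs_add_sq hp hμ hc hneg.le
  obtain ⟨d, hd, hlow⟩ := W.exists_rpow_le hK hl hμ hanti hmax
  obtain ⟨C, hC, hle⟩ := W.exists_sub_le hK hk hmono hmax W.apply_pi_lt hd hlow
  exact ⟨C, hC, fun a b ha hab hb ↦ hle a b ha hab hb (W.apply_pi_le b)⟩

theorem exists_sub_le_of_nSgn (hK : SingularKernel K α)
    (W : Wave K (fun s ↦ c * s - nSgn p s) φ) (hp : 1 < p) (hμ : 0 < μ)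
    (hc : p * μ ^ (p - 1) = c) (hmax : φ 0 ≤ μ) (hpos : 0 < φ 0) (hneg : φ π < 0)
    (hle : nSgn' p (φ π) ≤ c) :
    ∃ C > 0, ∀ a b, 0 ≤ a → a ≤ b → b ≤ π → φ a - φ b ≤ C * (b - a) ^ α := by
  have hn : EqOn (nSgn p) (fun s ↦ s ^ p) (Icc 0 μ) :=
    fun s hs ↦ nSgn_of_nonneg (by linarith) hs.1
  obtain ⟨k, hk, hmono⟩ := exists_monotoneOn_sub_add_sq hp hμ hc hn
  obtain ⟨l, hl, hanti⟩ := exists_antitoneOn_sub_add_sq hp hμ hc hn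
  have hodd : Function.Odd fun s ↦ c * s - nSgn p s := fun s ↦ by
    simp only [odd_nSgn p s]
    ring
  have habs : |φ π| ≤ μ := by
    rw [← hc, nSgn'] at hle
    exact (Real.rpow_le_rpow_iff (abs_nonneg _) hμ.le (sub_pos.mpr hp)).mp
      (le_of_mul_le_mul_left hle (by linarith))
  exact W.exists_sub_le_of_odd hK hodd hk hmono hl hanti hmax hpos hneg (abs_le.mp habs).1

end Wave

/-! ### Highest waves -/

lemma monotoneOn_Icc_of_monotoneOn_Ioo {f : ℝ → ℝ} {a b : ℝ} (hf : Continuous f) (hab : a < b)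
    (hmono : MonotoneOn f (Ioo a b)) : MonotoneOn f (Icc a b) := by
  rw [← Ico_insert_right hab.le, ← Ioo_insert_left hab]
  refine (hmono.insert_of_continuousWithinAt ?_ hf.continuousWithinAt).insert_of_continuousWithinAt
    ?_ hf.continuousWithinAt
  · rw [← mem_closure_iff_clusterPt, closure_Ioo hab.ne]
    exact left_mem_Icc.mpr hab.le
  · rw [← mem_closure_iff_clusterPt, Ioo_insert_left hab, closure_Ico hab.ne]
    exact right_mem_Icc.mpr hab.le

lemma BellShaped.apply_pi_neg {φ : ℝ → ℝ} (hφ : BellShaped φ) (hmean : ∫ y in -π..π, φ y = 0)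
    (hpos : 0 < φ 0) : φ π < 0 := by
  by_contra! hπ
  refine (intervalIntegral.integral_pos (by linarith [Real.pi_pos]) hφ.continuous.continuousOn
    (fun x _ ↦ hπ.trans (hφ.apply_pi_le x)) ⟨0, ⟨?_, Real.pi_pos.le⟩, hpos⟩).ne' hmean
  exact neg_nonpos.mpr Real.pi_pos.le

namespace IsSteadySolution

variable {α c : ℝ} {n φ : ℝ → ℝ}

lemma bellShaped (hφ : IsSteadySolution α c n φ) (heven : Function.Even φ)
    (hmono : MonotoneOn φ (Ioo (-π) 0)) : BellShaped φ where
  continuous := hφ.1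
  periodic := hφ.2.1
  even := heven
  antitoneOn x hx y hy hxy := by
    rw [← heven x, ← heven y]
    exact monotoneOn_Icc_of_monotoneOn_Ioo hφ.1 (neg_neg_of_pos Real.pi_pos) hmono
      ⟨neg_le_neg hy.2, neg_nonpos.mpr hy.1⟩ ⟨neg_le_neg hx.2, neg_nonpos.mpr hx.1⟩
      (neg_le_neg hxy)

lemma wave (hφ : IsSteadySolution α c n φ) (heven : Function.Even φ)
    (hmono : MonotoneOn φ (Ioo (-π) 0)) (hpos : 0 < φ 0) :
    Wave (Kker α) (fun s ↦ c * s - n s) φ where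
  toBellShaped := hφ.bellShaped heven hmono
  increment a b := by
    simp only [periodicConv, hφ.2.2.2]
    ring
  apply_pi_lt := ((hφ.bellShaped heven hmono).apply_pi_neg hφ.2.2.1 hpos).trans hpos

end IsSteadySolution

/-- Regularity of highest waves: an even, nontrivial steady solution
increasing on `(−π,0)` with `n′(φ) ≤ c` and attaining the maximum `φ(0) = μ` is
strictly increasing on `(−π,0)`, globally `α`-Hölder continuous, and exactly
`α`-Hölder continuous at `0`. -/
theorem statement15 (α p c : ℝ) (hα : α ∈ Set.Ioo (0:ℝ) 1) (hp : 1 < p) (hc : 0 < c)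
    (n n' : ℝ → ℝ)
    (hn : (n = nAbs p ∧ n' = nAbs' p) ∨ (n = nSgn p ∧ n' = nSgn' p))
    (φ : ℝ → ℝ) (hφ : IsSteadySolution α c n φ)
    (hnt : ∃ x, φ x ≠ 0) (heven : ∀ x, φ (-x) = φ x)
    (hmono : MonotoneOn φ (Set.Ioo (-π) 0))
    (hle : ∀ x : ℝ, n' (φ x) ≤ c)
    (hmax : φ 0 = (c / p) ^ (1 / (p - 1)))
    (hmax' : ∀ x : ℝ, φ x ≤ φ 0) :
    StrictMonoOn φ (Set.Ioo (-π) 0) ∧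
    (∃ C > 0, ∀ x y : ℝ, |φ x - φ y| ≤ C * |x - y| ^ α) ∧
    (∃ δ > 0, ∃ c₁ > 0, ∃ c₂ > 0, ∀ x : ℝ, |x| ≤ δ →
      c₁ * |x| ^ α ≤ (c / p) ^ (1 / (p - 1)) - φ x ∧
      (c / p) ^ (1 / (p - 1)) - φ x ≤ c₂ * |x| ^ α) := by
  have hpos : 0 < φ 0 := hmax ▸ by positivity
  have hcrit : p * φ 0 ^ (p - 1) = c := by
    rw [hmax, ← Real.rpow_mul (by positivity), one_div_mul_cancel (by linarith), Real.rpow_one]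
    field_simp
  have hrpow := eqOn_rpow_of_eq_nAbs_or_eq_nSgn (by linarith) (hn.imp And.left And.left)
  have hK := singularKernel_Kker hα.1 hα.2
  have W := hφ.wave heven hmono hpos
  have hneg : φ π < 0 := W.apply_pi_neg hφ.2.2.1 hpos
  obtain ⟨C, hC, hhalf⟩ : ∃ C > 0, ∀ a b, 0 ≤ a → a ≤ b → b ≤ π →
      φ a - φ b ≤ C * (b - a) ^ α := by
    rcases hn with ⟨rfl, rfl⟩ | ⟨rfl, rfl⟩
    · exact W.exists_sub_le_of_nAbs hK hp hpos hcrit le_rfl hneg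
    · exact W.exists_sub_le_of_nSgn hK hp hpos hcrit le_rfl hpos hneg (hle π)
  have hHolder := W.abs_sub_le_mul_rpow hα.1.le hC.le hhalf
  obtain ⟨k, hk, hanti⟩ := exists_antitoneOn_sub_add_sq hp hpos hcrit
    (hrpow.mono Icc_subset_Ici_self)
  obtain ⟨c₁, hc₁, hlow⟩ := W.exists_rpow_le hK hk hpos hanti le_rfl
  refine ⟨W.strictMonoOn hK, ⟨C, hC, hHolder⟩, π, Real.pi_pos, c₁, hc₁, C, hC, fun x hx ↦ ?_⟩
  rw [← hmax]
  refine ⟨?_, by simpa using (le_abs_self _).trans (hHolder 0 x)⟩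
  simpa [eq_of_cos_eq W.periodic W.even (Real.cos_abs x)] using hlow |x| ⟨abs_nonneg x, hx⟩
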